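/- arXiv:2006.00994 — 2 statements merged into one kernel-verified Lean document; each statement's English description precedes it below -/
import Mathlib

section
/- There exist infinitely many positive integers n for which there is an n-vertex planar graph G containing no Theta graph on 6 vertices as a subgraph with exactly (18/7)n - 48/7 edges. -/
open SimpleGraph

/-- `H` is a minor of `G`: there is an assignment of disjoint connected branch sets
of `G` to the vertices of `H` realizing all edges of `H`. -/
def HasMinor {V : Type*} {W : Type*} (G : SimpleGraph V) (H : SimpleGraph W) : Prop :=
  ∃ f : V → Option W,
    (∀ w : W, ∃ v, f v = some w) ∧
    (∀ w : W, (G.induce {v | f v = some w}).Preconnected) ∧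
    (∀ w₁ w₂ : W, H.Adj w₁ w₂ →
      ∃ v₁ v₂, f v₁ = some w₁ ∧ f v₂ = some w₂ ∧ G.Adj v₁ v₂)

/-- Planarity, via Wagner's theorem: no `K₅` minor and no `K₃,₃` minor. -/
def IsPlanar {V : Type*} (G : SimpleGraph V) : Prop :=
  ¬ HasMinor G (completeGraph (Fin 5)) ∧
    ¬ HasMinor G (completeBipartiteGraph (Fin 3) (Fin 3))

/-- `G` contains a Theta graph on 6 vertices: a 6-cycle together with a chord
joining two non-consecutive vertices of the cycle. -/
def HasTheta6 {V : Type*} (G : SimpleGraph V) : Prop :=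
  ∃ v : Fin 6 → V, Function.Injective v ∧
    (∀ i : Fin 6, G.Adj (v i) (v (i + 1))) ∧
    ∃ i j : Fin 6, i ≠ j ∧ j ≠ i + 1 ∧ i ≠ j + 1 ∧ G.Adj (v i) (v j)

/-!
A triangulation of the sphere with three vertices of degree 2 and all others of degree 6 has as dual
a cubic bipartite map whose faces are hexagons and three digons. Quotients of the hexagonal lattice
by Eisenstein ideals and by the rotation of order three give infinitely many such maps, on `M` black
and `M` white vertices. Replacing each vertex by a copy of `K₅` minus an edge, glued to its
neighbours at three contact vertices, gives a planar graph with `18 M` edges on `7 M` vertices.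

Away from the digons a cycle of length at most 5 stays inside one gadget, because a closed path
through the gadgets runs around a hexagon; and the two cycles cut off by the chord of a Theta graph
have length at most 5 and share an edge. At a digon the two gadgets share two contacts, and three of
their eight vertices are removed, so that five are left. This costs 9 vertices and 30 edges in
total, hence `n = 7 M - 9` and `18 M - 30 = 18/7 n - 48/7` edges.

Planarity is Whitney's criterion: when the cut space of a family of faces is the cycle space of the
graph, the same holds for every minor after merging the faces along deleted edges, and double
counting rules out `K₅` and `K₃,₃`. The duality itself follows from orthogonality of cuts and
Euler's inequality by comparing dimensions.
-/

section Coboundary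

variable {E V W : Type*}

/-- The coboundary, modulo 2, of the multigraph on `V` whose edge `e` has the ends `ends e`: it
sends a vertex labelling `p` to the edge labelling that adds up the labels of the two ends. -/
def coboundary (ends : E → Sym2 V) : (V → ZMod 2) →ₗ[ZMod 2] (E → ZMod 2) where
  toFun p e := Sym2.lift ⟨fun u v => p u + p v, fun u v => add_comm (p u) (p v)⟩ (ends e)
  map_add' p q := by
    ext e
    induction h : ends e with
    | _ u v => simp only [h, Sym2.lift_mk, Pi.add_apply]; ring
  map_smul' a p := by
    ext e
    induction h : ends e with
    | _ u v => simp only [h, Sym2.lift_mk, Pi.smul_apply, smul_add, RingHom.id_apply]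

lemma coboundary_apply_of_eq {ends : E → Sym2 V} {e : E} {u v : V} (h : ends e = s(u, v))
    (p : V → ZMod 2) : coboundary ends p e = p u + p v := by
  simp [coboundary, h]

lemma coboundary_map (ends : E → Sym2 V) (f : V → W) (p : W → ZMod 2) :
    coboundary (fun e => (ends e).map f) p = coboundary ends (p ∘ f) := by
  ext e
  induction h : ends e with
  | _ u v =>
    rw [coboundary_apply_of_eq h, coboundary_apply_of_eq (by rw [h, Sym2.map_mk])]
    rfl

lemma coboundary_one (ends : E → Sym2 V) : coboundary ends 1 = 0 := by
  ext e
  induction h : ends e with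
  | _ u v => rw [coboundary_apply_of_eq h]; exact CharTwo.add_self_eq_zero 1

lemma eq_of_coboundary_eq_zero {ends : E → Sym2 V} {p : V → ZMod 2} (hp : coboundary ends p = 0)
    {e : E} {u v : V} (h : ends e = s(u, v)) : p u = p v := by
  rw [← CharTwo.add_eq_zero, ← coboundary_apply_of_eq h, hp, Pi.zero_apply]

/-- The cycle space, modulo 2, of a multigraph: the edge sets orthogonal to every coboundary, that
is, those meeting every vertex an even number of times. -/
def cycleSpace [Fintype E] (ends : E → Sym2 V) : Submodule (ZMod 2) (E → ZMod 2) :=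
  (LinearMap.range (coboundary ends)).dualAnnihilator.comap
    (dotProductBilin (ZMod 2) (ZMod 2))

lemma mem_cycleSpace [Fintype E] {ends : E → Sym2 V} {z : E → ZMod 2} :
    z ∈ cycleSpace ends ↔ ∀ p, z ⬝ᵥ coboundary ends p = 0 := by
  simp [cycleSpace, Submodule.mem_dualAnnihilator]

lemma finrank_range_coboundary_add_finrank_cycleSpace [Fintype E] (ends : E → Sym2 V) :
    Module.finrank (ZMod 2) (LinearMap.range (coboundary ends)) +
      Module.finrank (ZMod 2) (cycleSpace ends) = Fintype.card E := by
  classical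
  have h := Subspace.finrank_add_finrank_dualAnnihilator_eq (LinearMap.range (coboundary ends))
  rw [Module.finrank_fintype_fun_eq_card] at h
  have cycleSpace_equiv :=
    (dotProductEquiv (ZMod 2) E).ofSubmodule' (LinearMap.range (coboundary ends)).dualAnnihilator
  rwa [← cycleSpace_equiv.finrank_eq] at h

/-- A multigraph is connected if only the constant labellings have zero coboundary. -/
def CoboundaryConnected (ends : E → Sym2 V) : Prop :=
  ∀ p : V → ZMod 2, coboundary ends p = 0 → ∀ u v, p u = p v

variable [Fintype V]

lemma finrank_range_coboundary_lt [Nonempty V] (ends : E → Sym2 V) :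
    Module.finrank (ZMod 2) (LinearMap.range (coboundary ends)) < Fintype.card V := by
  have rank_nullity := (coboundary ends).finrank_range_add_finrank_ker
  rw [Module.finrank_fintype_fun_eq_card] at rank_nullity
  have : Nontrivial (LinearMap.ker (coboundary ends)) :=
    ⟨⟨1, coboundary_one ends⟩, 0, fun h => one_ne_zero (congrArg Subtype.val h)⟩
  have := Module.finrank_pos (R := ZMod 2) (M := LinearMap.ker (coboundary ends))
  omega

lemma CoboundaryConnected.card_le_finrank_range_add_one [Nonempty V] {ends : E → Sym2 V}
    (h : CoboundaryConnected ends) :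
    Fintype.card V ≤ Module.finrank (ZMod 2) (LinearMap.range (coboundary ends)) + 1 := by
  have rank_nullity := (coboundary ends).finrank_range_add_finrank_ker
  rw [Module.finrank_fintype_fun_eq_card] at rank_nullity
  have ker_le : LinearMap.ker (coboundary ends) ≤ ZMod 2 ∙ (1 : V → ZMod 2) := fun p hp =>
    Submodule.mem_span_singleton.2 ⟨p (Classical.arbitrary V), funext fun v => by
      simpa using h p hp _ v⟩
  have := (Submodule.finrank_mono ker_le).trans_eq (finrank_span_singleton one_ne_zero)
  omega

end Coboundary

section AbstractDual

variable {E V F : Type*} [Fintype E]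

/-- Whitney's abstract duality: `sides` assigns to each edge the two faces on its sides, and the
cuts of the face multigraph are exactly the cycles of the multigraph `ends`. -/
def IsAbstractDual (ends : E → Sym2 V) (sides : E → Sym2 F) : Prop :=
  LinearMap.range (coboundary sides) = cycleSpace ends

lemma IsAbstractDual.of_euler [Fintype V] [Fintype F] [Nonempty V] [Nonempty F]
    {ends : E → Sym2 V} {sides : E → Sym2 F}
    (orthogonal : ∀ q p, coboundary sides q ⬝ᵥ coboundary ends p = 0)
    (primal : CoboundaryConnected ends) (dual : CoboundaryConnected sides)
    (euler : Fintype.card E + 2 ≤ Fintype.card V + Fintype.card F) :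
    IsAbstractDual ends sides := by
  have range_le : LinearMap.range (coboundary sides) ≤ cycleSpace ends := by
    rintro _ ⟨q, rfl⟩
    exact mem_cycleSpace.2 (orthogonal q)
  refine Submodule.eq_of_le_of_finrank_le range_le ?_
  have := finrank_range_coboundary_add_finrank_cycleSpace ends
  have := primal.card_le_finrank_range_add_one
  have := dual.card_le_finrank_range_add_one
  omega

end AbstractDual

section Minor

variable {E V F I W : Type*} [Fintype E]

/-- A model of the loopless multigraph `ends'` as a minor of the multigraph `ends`: disjoint branch
sets, each with a root, and an edge realizing each edge of `ends'`. Connectedness of a branch set is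
recorded homologically: each of its vertices is joined to the root by a chain of edges modulo 2. -/
structure MinorModel (ends : E → Sym2 V) (ends' : I → Sym2 W) where
  branch : V → Option W
  root : W → V
  edge : I → E
  edge_injective : Function.Injective edge
  map_branch_ends : ∀ i, (ends (edge i)).map branch = (ends' i).map some
  not_isDiag : ∀ i, ¬ (ends' i).IsDiag
  exists_chain : ∀ v w, branch v = some w → ∃ P : E → ZMod 2,
    (∀ e, P e ≠ 0 → ∀ x ∈ ends e, branch x = some w) ∧
      ∀ p, P ⬝ᵥ coboundary ends p = p v + p (root w)

namespace MinorModel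

variable {ends : E → Sym2 V} {ends' : I → Sym2 W} (m : MinorModel ends ends')

/-- An edge is contracted by a minor model if both its ends lie in one branch set. -/
def IsContracted (e : E) : Prop := ∃ w, ∀ x ∈ ends e, m.branch x = some w

/-- An edge is deleted by a minor model if it is neither contracted nor kept as an edge of the
minor. -/
def IsDeleted (e : E) : Prop := ¬ m.IsContracted e ∧ e ∉ Set.range m.edge

lemma not_isContracted_edge (i : I) : ¬ m.IsContracted (m.edge i) := by
  rintro ⟨w, hw⟩
  have h := m.map_branch_ends i
  refine m.not_isDiag i ?_
  induction hi : ends' i with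
  | _ a b =>
    have key : ∀ y ∈ (ends' i).map some, y = some w := by
      rw [← h]
      rintro y hy
      obtain ⟨x, hx, rfl⟩ := Sym2.mem_map.1 hy
      exact hw x hx
    rw [hi, Sym2.map_mk] at key
    exact Option.some_injective _ ((key _ (Sym2.mem_mk_left _ _)).trans
      (key _ (Sym2.mem_mk_right _ _)).symm)

lemma coboundary_contract_edge (q : W → ZMod 2) (i : I) :
    coboundary ends (fun v => (m.branch v).elim 0 q) (m.edge i) = coboundary ends' q i := by
  have h := congrFun (coboundary_map ends m.branch fun y => y.elim 0 q) (m.edge i)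
  have h' := congrFun (coboundary_map ends' some fun y : Option W => y.elim 0 q) i
  exact h.symm.trans (Eq.trans (by simp only [coboundary, LinearMap.coe_mk, AddHom.coe_mk,
    m.map_branch_ends]) h')

lemma coboundary_contract_of_isContracted (q : W → ZMod 2) {e : E} (he : m.IsContracted e) :
    coboundary ends (fun v => (m.branch v).elim 0 q) e = 0 := by
  obtain ⟨w, hw⟩ := he
  induction h : ends e with
  | _ a b =>
    rw [h] at hw
    rw [coboundary_apply_of_eq h, hw a (Sym2.mem_mk_left _ _), hw b (Sym2.mem_mk_right _ _)]
    exact CharTwo.add_self_eq_zero _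

lemma restrict_mem_cycleSpace [Fintype I] {z : E → ZMod 2} (hz : z ∈ cycleSpace ends)
    (deleted : ∀ e, m.IsDeleted e → z e = 0) : z ∘ m.edge ∈ cycleSpace ends' := by
  refine mem_cycleSpace.2 fun q => ?_
  rw [← mem_cycleSpace.1 hz fun v => (m.branch v).elim 0 q]
  refine Fintype.sum_of_injective m.edge m.edge_injective _ _ (fun e he => ?_) fun i => ?_
  · by_cases contracted : m.IsContracted e
    · rw [m.coboundary_contract_of_isContracted q contracted, mul_zero]
    · rw [deleted e ⟨contracted, he⟩, zero_mul]
  · rw [Function.comp_apply, m.coboundary_contract_edge]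

lemma exists_lift_edge [DecidableEq I] (i : I) : ∃ L : E → ZMod 2,
    (∀ p, L ⬝ᵥ coboundary ends p = coboundary ends' (p ∘ m.root) i) ∧
      (∀ j, L (m.edge j) = Pi.single (M := fun _ => ZMod 2) i 1 j) ∧
        ∀ e, m.IsDeleted e → L e = 0 := by
  classical
  induction h : ends (m.edge i) with
  | _ u v =>
  induction h' : ends' i with
  | _ a b =>
  have branch_eq : s(m.branch u, m.branch v) = s(some a, some b) := by
    rw [← Sym2.map_mk, ← Sym2.map_mk, ← h, ← h']
    exact m.map_branch_ends i
  wlog oriented : m.branch u = some a ∧ m.branch v = some b generalizing u v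
  · refine this v u (h.trans Sym2.eq_swap) (Sym2.eq_swap.trans branch_eq) ?_
    exact ((Sym2.eq_iff.1 branch_eq).resolve_left oriented).symm
  obtain ⟨P, P_contracted, hP⟩ := m.exists_chain u a oriented.1
  obtain ⟨Q, Q_contracted, hQ⟩ := m.exists_chain v b oriented.2
  have P_eq_zero : ∀ e, ¬ m.IsContracted e → P e = 0 := fun e he =>
    not_not.1 fun h => he ⟨a, P_contracted e h⟩
  have Q_eq_zero : ∀ e, ¬ m.IsContracted e → Q e = 0 := fun e he =>
    not_not.1 fun h => he ⟨b, Q_contracted e h⟩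
  refine ⟨Pi.single (m.edge i) 1 + P + Q, fun p => ?_, fun j => ?_, fun e he => ?_⟩
  · rw [add_dotProduct, add_dotProduct, single_one_dotProduct, hP, hQ, coboundary_apply_of_eq h,
      coboundary_apply_of_eq h', Function.comp_apply, Function.comp_apply]
    linear_combination CharTwo.add_self_eq_zero (p u) + CharTwo.add_self_eq_zero (p v)
  · have hj := m.not_isContracted_edge j
    simp [P_eq_zero _ hj, Q_eq_zero _ hj, Pi.single_apply, m.edge_injective.eq_iff]
  · have he_ne : e ≠ m.edge i := fun h => he.2 ⟨i, h.symm⟩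
    simp [P_eq_zero e he.1, Q_eq_zero e he.1, he_ne]

lemma exists_lift_cycle [Fintype I] {z' : I → ZMod 2} (hz' : z' ∈ cycleSpace ends') :
    ∃ z ∈ cycleSpace ends, z ∘ m.edge = z' ∧ ∀ e, m.IsDeleted e → z e = 0 := by
  classical
  choose L L_boundary L_edge L_deleted using m.exists_lift_edge
  refine ⟨∑ i, z' i • L i, mem_cycleSpace.2 fun p => ?_, funext fun j => ?_, fun e he => ?_⟩
  · rw [sum_dotProduct, ← mem_cycleSpace.1 hz' (p ∘ m.root)]
    exact Fintype.sum_congr _ _ fun i => by rw [smul_dotProduct, L_boundary, smul_eq_mul]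
  · simp [L_edge, Pi.single_apply]
  · simp [L_deleted _ e he]

end MinorModel

/-- The equivalence classes of faces merged by deleting edges in a minor model. -/
abbrev MinorModel.Face {ends : E → Sym2 V} {ends' : I → Sym2 W} (m : MinorModel ends ends')
    (sides : E → Sym2 F) : Type _ :=
  Quot fun a b => ∃ e, m.IsDeleted e ∧ sides e = s(a, b)

lemma IsAbstractDual.minor [Fintype I] {ends : E → Sym2 V} {sides : E → Sym2 F}
    (h : IsAbstractDual ends sides) {ends' : I → Sym2 W} (m : MinorModel ends ends') :
    IsAbstractDual ends' fun i => (sides (m.edge i)).map (Quot.mk _ : F → m.Face sides) := by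
  have comp_edge (q : m.Face sides → ZMod 2) :
      coboundary (fun i => (sides (m.edge i)).map (Quot.mk _)) q =
        coboundary sides (q ∘ Quot.mk _) ∘ m.edge :=
    coboundary_map (fun i => sides (m.edge i)) _ q
  refine le_antisymm ?_ fun z' hz' => ?_
  · rintro _ ⟨q, rfl⟩
    rw [comp_edge]
    refine m.restrict_mem_cycleSpace (h ▸ LinearMap.mem_range_self _ _) fun e he => ?_
    induction hs : sides e with
    | _ a b =>
      rw [coboundary_apply_of_eq hs, Function.comp_apply, Function.comp_apply,
        Quot.sound ⟨e, he, hs⟩]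
      exact CharTwo.add_self_eq_zero _
  · obtain ⟨z, hz, rfl, z_deleted⟩ := m.exists_lift_cycle hz'
    obtain ⟨q, rfl⟩ : z ∈ LinearMap.range (coboundary sides) := h ▸ hz
    refine ⟨Quot.lift q ?_, comp_edge _⟩
    rintro a b ⟨e, he, hs⟩
    have := z_deleted e he
    rwa [coboundary_apply_of_eq hs, CharTwo.add_eq_zero] at this

lemma exists_chain_of_reachable {ends : E → Sym2 V} {G : SimpleGraph V}
    (cover : G.edgeSet ⊆ Set.range ends) {s : Set V} {u v : s}
    (h : (G.induce s).Reachable u v) : ∃ P : E → ZMod 2,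
      (∀ e, P e ≠ 0 → ∀ x ∈ ends e, x ∈ s) ∧ ∀ p, P ⬝ᵥ coboundary ends p = p u + p v := by
  classical
  obtain ⟨walk⟩ := h
  induction walk with
  | nil => exact ⟨0, by simp, fun p => by simp [CharTwo.add_self_eq_zero]⟩
  | @cons u x v adj _ ih =>
    obtain ⟨P, P_supp, hP⟩ := ih
    obtain ⟨e, he⟩ := cover (show s(u.1, x.1) ∈ G.edgeSet from adj)
    refine ⟨Pi.single e 1 + P, fun e' he' => ?_, fun p => ?_⟩
    · by_cases h : e' = e
      · subst h
        simp [he]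
      · exact P_supp e' (by simpa [h] using he')
    · rw [add_dotProduct, single_one_dotProduct, coboundary_apply_of_eq he, hP]
      linear_combination CharTwo.add_self_eq_zero (p x)

lemma HasMinor.nonempty_minorModel {ends : E → Sym2 V} {G : SimpleGraph V} {H : SimpleGraph W}
    (cover : G.edgeSet ⊆ Set.range ends) (h : HasMinor G H) :
    Nonempty (MinorModel ends (Subtype.val : H.edgeSet → Sym2 W)) := by
  obtain ⟨branch, nonempty, connected, realized⟩ := h
  choose root hroot using nonempty
  have exists_edge (i : H.edgeSet) : ∃ e, (ends e).map branch = i.1.map some := by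
    obtain ⟨⟨a, b⟩, hab⟩ := i
    obtain ⟨u, v, hu, hv, adj⟩ := realized a b hab
    obtain ⟨e, he⟩ := cover (show s(u, v) ∈ G.edgeSet from adj)
    exact ⟨e, by rw [he, Sym2.map_mk, hu, hv]; rfl⟩
  choose edge hedge using exists_edge
  exact ⟨{
    branch, root, edge
    edge_injective := fun i j hij => Subtype.ext <| Sym2.map.injective (Option.some_injective W) <|
      (hedge i).symm.trans ((congrArg (fun e => (ends e).map branch) hij).trans (hedge j))
    map_branch_ends := hedge
    not_isDiag := fun i => H.not_isDiag_of_mem_edgeSet i.2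
    exists_chain := fun v w hv =>
      exists_chain_of_reachable cover (connected w ⟨v, hv⟩ ⟨root w, hroot w⟩) }⟩

lemma HasMinor.mono {V' : Type*} {G : SimpleGraph V} {G' : SimpleGraph V'} {H : SimpleGraph W}
    (contained : G ⊑ G') (h : HasMinor G H) : HasMinor G' H := by
  obtain ⟨f⟩ := contained
  obtain ⟨branch, nonempty, connected, realized⟩ := h
  have extend_apply (v : V) : Function.extend f branch (fun _ => none) (f v) = branch v :=
    f.injective.extend_apply _ _ _
  refine ⟨Function.extend f branch fun _ => none, fun w => ?_, fun w => ?_, fun w₁ w₂ adj => ?_⟩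
  · obtain ⟨v, hv⟩ := nonempty w
    exact ⟨f v, (extend_apply v).trans hv⟩
  · let φ : G.induce {v | branch v = some w} →g
        G'.induce {v | Function.extend f branch (fun _ => none) v = some w} :=
      ⟨fun v => ⟨f v, (extend_apply v).trans v.2⟩, fun h => f.toHom.map_adj h⟩
    refine (connected w).map φ ?_
    rintro ⟨v, hv⟩
    obtain ⟨u, rfl⟩ : ∃ u, f u = v := by
      by_contra not_mem
      simp [Function.extend_apply' branch _ v not_mem] at hv
    exact ⟨⟨u, (extend_apply u).symm.trans hv⟩, rfl⟩
  · obtain ⟨u, v, hu, hv, adj⟩ := realized w₁ w₂ adj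
    exact ⟨f u, f v, (extend_apply u).trans hu, (extend_apply v).trans hv, f.toHom.map_adj adj⟩

lemma IsPlanar.mono {V' : Type*} {G : SimpleGraph V} {G' : SimpleGraph V'} (contained : G ⊑ G')
    (h : IsPlanar G') : IsPlanar G :=
  ⟨fun minor => h.1 (minor.mono contained), fun minor => h.2 (minor.mono contained)⟩

lemma HasTheta6.mono {V' : Type*} {G : SimpleGraph V} {G' : SimpleGraph V'} (contained : G ⊑ G')
    (h : HasTheta6 G) : HasTheta6 G' := by
  obtain ⟨f⟩ := contained
  obtain ⟨v, v_injective, cycle, i, j, hij, hij', hji', chord⟩ := h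
  exact ⟨f ∘ v, f.injective.comp v_injective, fun i => f.toHom.map_adj (cycle i),
    i, j, hij, hij', hji', f.toHom.map_adj chord⟩

end Minor

section EdgeBound

variable {E V F : Type*}

lemma mem_of_coboundary_single_ne_zero [DecidableEq V] {ends : E → Sym2 V} {e : E} {v : V}
    (h : coboundary ends (Pi.single v 1) e ≠ 0) : v ∈ ends e := by
  induction he : ends e with
  | _ a b =>
    rw [coboundary_apply_of_eq he] at h
    contrapose! h
    rw [Sym2.mem_iff, not_or] at h
    simp [Ne.symm h.1, Ne.symm h.2]

variable [Fintype E]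

lemma exists_ne_mem_of_mem_cycleSpace {ends : E → Sym2 V} {z : E → ZMod 2}
    (hz : z ∈ cycleSpace ends) {e : E} (he : z e ≠ 0) {a b : V} (hab : a ≠ b)
    (ends_eq : ends e = s(a, b)) : ∃ e' ≠ e, z e' ≠ 0 ∧ a ∈ ends e' := by
  classical
  by_contra! isolated
  refine he ?_
  rw [← mem_cycleSpace.1 hz (Pi.single a 1), dotProduct, Fintype.sum_eq_single e fun e' he' => ?_,
    coboundary_apply_of_eq ends_eq, Pi.single_eq_same, Pi.single_eq_of_ne hab.symm, add_zero,
    mul_one]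
  by_contra! h
  exact isolated e' he' (left_ne_zero_of_mul h)
    (mem_of_coboundary_single_ne_zero (right_ne_zero_of_mul h))

lemma three_le_card_support_of_mem_cycleSpace {ends : E → Sym2 V}
    (ends_injective : Function.Injective ends) (loopless : ∀ e, ¬ (ends e).IsDiag)
    {z : E → ZMod 2} (hz : z ∈ cycleSpace ends) (z_ne : z ≠ 0) :
    3 ≤ (Finset.univ.filter fun e => z e ≠ 0).card := by
  obtain ⟨e, he⟩ := Function.ne_iff.1 z_ne
  have h_loop := loopless e
  induction h : ends e with
  | _ a b =>
  rw [h, Sym2.mk_isDiag_iff] at h_loop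
  obtain ⟨e₁, he₁, hz₁, ha⟩ := exists_ne_mem_of_mem_cycleSpace hz he h_loop h
  obtain ⟨e₂, he₂, hz₂, hb⟩ :=
    exists_ne_mem_of_mem_cycleSpace hz he (Ne.symm h_loop) (h.trans Sym2.eq_swap)
  have h₁₂ : e₁ ≠ e₂ := by
    rintro rfl
    exact he₁ (ends_injective (((Sym2.mem_and_mem_iff h_loop).1 ⟨ha, hb⟩).trans h.symm))
  exact Finset.two_lt_card.2 ⟨e, by simpa using he, e₁, by simpa using hz₁, e₂, by simpa using hz₂,
    he₁.symm, he₂.symm, h₁₂⟩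

lemma even_card_support_of_mem_cycleSpace {ends : E → Sym2 V} {p : V → ZMod 2}
    (bipartition : coboundary ends p = 1) {z : E → ZMod 2} (hz : z ∈ cycleSpace ends) :
    Even (Finset.univ.filter fun e => z e ≠ 0).card := by
  rw [← ZMod.natCast_eq_zero_iff_even, Finset.cast_card]
  calc
    _ = ∑ e with z e ≠ 0, z e := Finset.sum_congr rfl fun e he =>
      (Fin.eq_one_of_ne_zero (z e) (Finset.mem_filter.1 he).2).symm
    _ = z ⬝ᵥ coboundary ends p := by rw [bipartition, dotProduct_one, Finset.sum_filter_ne_zero]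
    _ = 0 := mem_cycleSpace.1 hz p

lemma finrank_range_coboundary_lt_card_nonisolated [Fintype V] [DecidableEq V]
    {ends : E → Sym2 V} (nontrivial : coboundary ends ≠ 0) :
    Module.finrank (ZMod 2) (LinearMap.range (coboundary ends)) <
      (Finset.univ.filter fun v => coboundary ends (Pi.single v 1) ≠ 0).card := by
  set C := Finset.univ.filter fun v => coboundary ends (Pi.single v 1) ≠ 0 with hC
  have expand (p : V → ZMod 2) :
      coboundary ends p = ∑ v ∈ C, p v • coboundary ends (Pi.single v 1) := by
    conv_lhs => rw [pi_eq_sum_univ' p, map_sum]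
    simp only [map_smul]
    rw [hC, Finset.sum_filter_of_ne fun v _ h => right_ne_zero_of_smul h]
  obtain ⟨v₀, hv₀⟩ : C.Nonempty := by
    rw [Finset.nonempty_iff_ne_empty]
    intro h
    exact nontrivial (LinearMap.ext fun p => by simp [expand p, h])
  have range_le : LinearMap.range (coboundary ends) ≤ Submodule.span (ZMod 2)
      ((C.erase v₀).image fun v => coboundary ends (Pi.single v 1)) := by
    rintro _ ⟨p, rfl⟩
    have shift : coboundary ends p = coboundary ends (p - p v₀ • 1) := by
      rw [map_sub, map_smul, coboundary_one, smul_zero, sub_zero]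
    rw [shift, expand, ← Finset.add_sum_erase _ _ hv₀]
    refine add_mem (by simp) (Submodule.sum_mem _ fun v hv => Submodule.smul_mem _ _ ?_)
    exact Submodule.subset_span (Finset.mem_coe.2 (Finset.mem_image_of_mem _ hv))
  calc
    _ ≤ _ := Submodule.finrank_mono range_le
    _ ≤ _ := finrank_span_finset_le_card _
    _ ≤ (C.erase v₀).card := Finset.card_image_le
    _ < C.card := Finset.card_erase_lt_of_mem hv₀

lemma IsAbstractDual.girth_mul_card_add_two_le [Fintype V] [Nonempty V] [Finite F]
    {ends : E → Sym2 V} {sides : E → Sym2 F} (h : IsAbstractDual ends sides)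
    (card_le : Fintype.card V ≤ Fintype.card E) {k : ℕ}
    (girth : ∀ z ∈ cycleSpace ends, z ≠ 0 → k ≤ (Finset.univ.filter fun e => z e ≠ 0).card) :
    k * (Fintype.card E + 2) ≤ 2 * Fintype.card E + k * Fintype.card V := by
  classical
  have := Fintype.ofFinite F
  have finrank_sum := finrank_range_coboundary_add_finrank_cycleSpace ends
  have finrank_lt := finrank_range_coboundary_lt ends
  rw [← h] at finrank_sum
  have nontrivial : coboundary sides ≠ 0 := by
    intro h0
    rw [h0, LinearMap.range_zero, finrank_bot] at finrank_sum
    omega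
  have finrank_lt_faces := finrank_range_coboundary_lt_card_nonisolated nontrivial
  set C := Finset.univ.filter fun κ => coboundary sides (Pi.single κ 1) ≠ 0
  have incidences : C.card * k ≤ Fintype.card E * 2 :=
    Finset.card_mul_le_card_mul (fun κ e => coboundary sides (Pi.single κ 1) e ≠ 0)
      (fun κ hκ => girth _ (h ▸ LinearMap.mem_range_self _ _) (Finset.mem_filter.1 hκ).2)
      fun e _ => by
        induction he : sides e with
        | _ a b =>
        refine (Finset.card_le_card fun κ hκ => ?_).trans (Finset.card_le_two (a := a) (b := b))
        simpa [he] using mem_of_coboundary_single_ne_zero (Finset.mem_filter.1 hκ).2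
  have : k * (Fintype.card E + 2) ≤ k * (C.card + Fintype.card V) :=
    Nat.mul_le_mul_left k (by omega)
  linarith

end EdgeBound

section Planarity

variable {E V F W : Type*} [Fintype E] [Finite F]

lemma IsAbstractDual.girth_mul_ncard_edgeSet_add_two_le [Fintype W] [Nonempty W]
    {ends : E → Sym2 V} {sides : E → Sym2 F} (h : IsAbstractDual ends sides) {G : SimpleGraph V}
    (cover : G.edgeSet ⊆ Set.range ends) {H : SimpleGraph W} [Fintype H.edgeSet]
    (minor : HasMinor G H) (card_le : Fintype.card W ≤ H.edgeSet.ncard) {k : ℕ}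
    (girth : ∀ z ∈ cycleSpace (Subtype.val : H.edgeSet → Sym2 W), z ≠ 0 →
      k ≤ (Finset.univ.filter fun e => z e ≠ 0).card) :
    k * (H.edgeSet.ncard + 2) ≤ 2 * H.edgeSet.ncard + k * Fintype.card W := by
  obtain ⟨m⟩ := minor.nonempty_minorModel cover
  rw [← Nat.card_coe_set_eq, Nat.card_eq_fintype_card] at card_le ⊢
  have : Finite (m.Face sides) := Quot.finite _
  exact (h.minor m).girth_mul_card_add_two_le card_le girth

lemma coboundary_indicator_completeBipartiteGraph (V W : Type*) :
    coboundary (Subtype.val : (completeBipartiteGraph V W).edgeSet → Sym2 (V ⊕ W))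
      (Sum.elim 0 1) = 1 := by
  ext ⟨e, he⟩
  rw [edgeSet_completeBipartiteGraph] at he
  obtain ⟨⟨a, b⟩, rfl⟩ := he
  exact (coboundary_apply_of_eq rfl _).trans (zero_add 1)

lemma three_le_card_support_of_mem_cycleSpace_edgeSet {H : SimpleGraph W} [Fintype H.edgeSet]
    (z : H.edgeSet → ZMod 2) (hz : z ∈ cycleSpace (Subtype.val : H.edgeSet → Sym2 W))
    (z_ne : z ≠ 0) : 3 ≤ (Finset.univ.filter fun e => z e ≠ 0).card :=
  three_le_card_support_of_mem_cycleSpace Subtype.val_injective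
    (fun e => H.not_isDiag_of_mem_edgeSet e.2) hz z_ne

lemma four_le_card_support_of_mem_cycleSpace_completeBipartiteGraph {U W : Type*}
    [Fintype (completeBipartiteGraph U W).edgeSet]
    (z : (completeBipartiteGraph U W).edgeSet → ZMod 2)
    (hz : z ∈ cycleSpace (Subtype.val : (completeBipartiteGraph U W).edgeSet → Sym2 (U ⊕ W)))
    (z_ne : z ≠ 0) : 4 ≤ (Finset.univ.filter fun e => z e ≠ 0).card := by
  have three_le := three_le_card_support_of_mem_cycleSpace_edgeSet z hz z_ne
  obtain ⟨m, hm⟩ := even_card_support_of_mem_cycleSpace (E := (completeBipartiteGraph U W).edgeSet)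
    (coboundary_indicator_completeBipartiteGraph U W) hz
  omega

lemma IsAbstractDual.isPlanar {ends : E → Sym2 V} {sides : E → Sym2 F}
    (h : IsAbstractDual ends sides) {G : SimpleGraph V} (cover : G.edgeSet ⊆ Set.range ends) :
    IsPlanar G := by
  refine ⟨fun minor => ?_, fun minor => ?_⟩
  · have card_edges : (completeGraph (Fin 5)).edgeSet.ncard = 10 := by
      rw [← coe_edgeFinset, Set.ncard_coe_finset]
      exact card_edgeFinset_top_eq_card_choose_two
    have := h.girth_mul_ncard_edgeSet_add_two_le cover minor (by rw [card_edges]; simp)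
      three_le_card_support_of_mem_cycleSpace_edgeSet
    rw [card_edges, Fintype.card_fin] at this
    omega
  · have card_edges : (completeBipartiteGraph (Fin 3) (Fin 3)).edgeSet.ncard = 9 := by
      simp [Set.ncard, encard_edgeSet_completeBipartiteGraph]
    have := Fintype.ofFinite (completeBipartiteGraph (Fin 3) (Fin 3)).edgeSet
    have := h.girth_mul_ncard_edgeSet_add_two_le cover minor (by rw [card_edges]; simp)
      four_le_card_support_of_mem_cycleSpace_completeBipartiteGraph
    rw [card_edges, Fintype.card_sum, Fintype.card_fin] at this
    omega

end Planarity

section OrbitCount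

lemma card_add_le_mul_card_quotient_sameCycle_add_one {α : Type*} [Fintype α] {f : Equiv.Perm α}
    {n : ℕ} (n_pos : 0 < n) (f_pow : f ^ n = 1) {a : α} (fixed : f a = a)
    [Fintype (Quotient (Equiv.Perm.SameCycle.setoid f))] :
    Fintype.card α + n ≤ n * Fintype.card (Quotient (Equiv.Perm.SameCycle.setoid f)) + 1 := by
  classical
  set cycle : α → Quotient (Equiv.Perm.SameCycle.setoid f) := Quotient.mk _
  have card_fiber_le (o) : (Finset.univ.filter fun x => cycle x = o).card ≤ n := by
    obtain ⟨b, rfl⟩ := Quotient.exists_rep o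
    refine (Finset.card_le_card (t := (Finset.range n).image fun i => (f ^ i) b)
      fun x hx => ?_).trans (Finset.card_image_le.trans_eq (Finset.card_range n))
    have same_cycle : f.SameCycle b x := Quotient.exact (Finset.mem_filter.1 hx).2.symm
    obtain ⟨i, hi, rfl⟩ := same_cycle.exists_pow_eq'
    refine Finset.mem_image_of_mem _ (Finset.mem_range.2 (hi.trans_le ?_))
    exact orderOf_le_of_pow_eq_one n_pos f_pow
  have fixed_fiber : (Finset.univ.filter fun x => cycle x = cycle a) = {a} := by
    ext x
    rw [Finset.mem_filter_univ, Finset.mem_singleton]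
    refine ⟨fun h => ?_, fun h => h ▸ rfl⟩
    exact ((Quotient.exact h : f.SameCycle x a).eq_of_right fixed)
  have card_eq := Finset.card_eq_sum_card_fiberwise (s := Finset.univ) (f := cycle)
    (fun x _ => Finset.mem_univ (cycle x))
  rw [← Finset.add_sum_erase _ _ (Finset.mem_univ (cycle a)), fixed_fiber, Finset.card_singleton,
    Finset.card_univ] at card_eq
  have other_fibers := Finset.sum_le_card_nsmul _ _ n fun o (_ : o ∈ Finset.univ.erase (cycle a)) =>
    card_fiber_le o
  rw [Finset.card_erase_of_mem (Finset.mem_univ _), smul_eq_mul, Finset.card_univ] at other_fibers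
  have pos : 0 < Fintype.card (Quotient (Equiv.Perm.SameCycle.setoid f)) :=
    Fintype.card_pos_iff.2 ⟨cycle a⟩
  obtain ⟨k, hk⟩ := Nat.exists_eq_succ_of_ne_zero pos.ne'
  rw [hk] at other_fibers ⊢
  rw [Nat.succ_sub_one] at other_fibers
  linarith

end OrbitCount

section Gadget

/-- A vertex of the gadget, a copy of `K₅` minus an edge: three contacts, which the gadget shares
with other gadgets, and two private vertices. -/
abbrev GadgetVertex : Type := Fin 3 ⊕ Fin 2

/-- An edge of the gadget: the triangle on the contacts, the spokes from the private vertex `0` to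
the contacts, and the edges from the private vertex `1` to the contacts `0`, `1` and the private
vertex `0`. -/
abbrev GadgetEdge : Type := Fin 3 ⊕ Fin 3 ⊕ Fin 3

/-- A face meeting the gadget: three outer faces, opposite to the edges of the contact triangle, and
five inner ones. -/
abbrev GadgetFace : Type := Fin 3 ⊕ Fin 5

/-- The ends of the edges of the gadget; the private vertex `1` and the contact `2` are the two
nonadjacent vertices. -/
def gadgetEnds : GadgetEdge → Sym2 GadgetVertex
  | .inl c => s(.inl c, .inl (c + 1))
  | .inr (.inl c) => s(.inl c, .inr 0)
  | .inr (.inr k) => s(![.inl 0, .inl 1, .inr 0] k, .inr 1)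

/-- The sides of the edges of the gadget, drawn with the private vertices inside the contact
triangle: inner faces `0`, `3` and `4` surround the private vertex `1`. -/
def gadgetSides : GadgetEdge → Sym2 GadgetFace
  | .inl c => s(.inl c, .inr (![0, 1, 2] c))
  | .inr (.inl c) => ![s(.inr 4, .inr 2), s(.inr 3, .inr 1), s(.inr 1, .inr 2)] c
  | .inr (.inr k) => ![s(.inr 0, .inr 4), s(.inr 0, .inr 3), s(.inr 3, .inr 4)] k

lemma coboundary_gadgetSides_dotProduct_gadgetEnds (q : GadgetFace → ZMod 2)
    (p : GadgetVertex → ZMod 2) :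
    coboundary gadgetSides q ⬝ᵥ coboundary gadgetEnds p =
      ∑ c, q (.inl c) * (p (.inl c) + p (.inl (c + 1))) := by
  simp only [dotProduct, Fintype.sum_sum_type, Fin.sum_univ_three, coboundary, gadgetEnds,
    gadgetSides, LinearMap.coe_mk, AddHom.coe_mk, Sym2.lift_mk, Matrix.cons_val_zero,
    Matrix.cons_val_one, Matrix.cons_val_two, Matrix.head_cons, Matrix.tail_cons, Fin.isValue,
    zero_add, Fin.reduceAdd]
  linear_combination (q (.inr 0) * (p (.inl 0) + p (.inl 1) + p (.inr 1)) +
    q (.inr 1) * (p (.inl 1) + p (.inl 2) + p (.inr 0)) +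
    q (.inr 2) * (p (.inl 2) + p (.inl 0) + p (.inr 0)) +
    q (.inr 3) * (p (.inl 1) + p (.inr 0) + p (.inr 1)) +
    q (.inr 4) * (p (.inl 0) + p (.inr 0) + p (.inr 1))) * CharTwo.two_eq_zero (R := ZMod 2)

lemma gadgetEnds_coboundaryConnected : CoboundaryConnected gadgetEnds := by
  intro p hp
  have contact (c) : p (.inl c) = p (.inr 0) :=
    eq_of_coboundary_eq_zero hp (e := .inr (.inl c)) rfl
  have priv : p (.inr 0) = p (.inr 1) := eq_of_coboundary_eq_zero hp (e := .inr (.inr 2)) rfl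
  have eq_priv : ∀ v, p v = p (.inr 0) :=
    Sum.rec contact (Fin.forall_fin_two.2 ⟨rfl, priv.symm⟩)
  exact fun u v => (eq_priv u).trans (eq_priv v).symm

lemma gadgetSides_coboundaryConnected : CoboundaryConnected gadgetSides := by
  intro q hq
  have h₀₄ : q (.inr 0) = q (.inr 4) := eq_of_coboundary_eq_zero hq (e := .inr (.inr 0)) rfl
  have h₀₃ : q (.inr 0) = q (.inr 3) := eq_of_coboundary_eq_zero hq (e := .inr (.inr 1)) rfl
  have h₄₂ : q (.inr 4) = q (.inr 2) := eq_of_coboundary_eq_zero hq (e := .inr (.inl 0)) rfl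
  have h₃₁ : q (.inr 3) = q (.inr 1) := eq_of_coboundary_eq_zero hq (e := .inr (.inl 1)) rfl
  have inner (k) : q (.inr k) = q (.inr 0) := by
    fin_cases k
    exacts [rfl, (h₀₃.trans h₃₁).symm, (h₀₄.trans h₄₂).symm, h₀₃.symm, h₀₄.symm]
  have outer (c) : q (.inl c) = q (.inr 0) :=
    (eq_of_coboundary_eq_zero hq (e := .inl c) rfl).trans (inner _)
  exact fun u v => (Sum.rec outer inner u : q u = q (.inr 0)).trans
    (Sum.rec outer inner v : q v = q (.inr 0)).symm

end Gadget

section Honeycomb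

/-- The permutation of the black vertices of a properly 3-edge-coloured cubic bipartite map that
follows an edge of colour `c + 1` and then an edge of colour `c`. Its cycles are the faces bounded
by these two colours; `link c` sends a black vertex to its white neighbour along colour `c`. -/
def hexagonRotation {R : Type*} (link : Fin 3 → Equiv.Perm R) (c : Fin 3) : Equiv.Perm R :=
  (link (c + 1)).trans (link c).symm

/-- A connected cubic bipartite map on the sphere, properly 3-edge-coloured, with black and white
vertices indexed by `R`, all of whose faces are hexagons except for one digon for each pair of
colours. The digon of the colours `c` and `c + 1` has the black vertex `cone c`. Such a map is the
plane dual of a triangulation with three vertices of degree 2 and all others of degree 6. -/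
structure Honeycomb (R : Type*) where
  link : Fin 3 → Equiv.Perm R
  cone : Fin 3 → R
  rotation_pow_three : ∀ c, hexagonRotation link c ^ 3 = 1
  rotation_eq_self_iff : ∀ c x, hexagonRotation link c x = x ↔ x = cone c
  rotation_ne : ∀ a b, a ≠ b → ∀ x, hexagonRotation link a x ≠ hexagonRotation link b x
  eq_univ_of_rotation_mem : ∀ s : Set R, s.Nonempty →
    (∀ c, ∀ x ∈ s, hexagonRotation link c x ∈ s) → s = Set.univ

namespace Honeycomb

variable {R : Type*} (H : Honeycomb R)

/-- Following colour `c + 1` and then colour `c`, from black to black. -/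
abbrev rotation (c : Fin 3) : Equiv.Perm R := hexagonRotation H.link c

lemma link_rotation (c : Fin 3) (x : R) : H.link c (H.rotation c x) = H.link (c + 1) x := by
  simp [hexagonRotation]

/-- A vertex of the snowflake graph: a contact, which is an edge of the honeycomb recorded by its
black end and its colour, or one of the two private vertices of the gadget that replaces a vertex
`(colour, x)` of the honeycomb, where the colour is `false` for black and `true` for white. -/
abbrev Vertex (R : Type*) : Type _ := R × Fin 3 ⊕ (Bool × R) × Fin 2

/-- An edge of the snowflake graph: an edge of the gadget at a vertex of the honeycomb. -/
abbrev Edge (R : Type*) : Type _ := (Bool × R) × GadgetEdge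

/-- A face of the snowflake graph: a face of the honeycomb or an inner face of a gadget. -/
abbrev Face : Type _ :=
  (Σ c, Quotient (Equiv.Perm.SameCycle.setoid (H.rotation c))) ⊕ (Bool × R) × Fin 5

/-- The black end of the edge of colour `c` at the vertex `β` of the honeycomb. -/
def base (β : Bool × R) (c : Fin 3) : R := if β.1 then (H.link c).symm β.2 else β.2

lemma base_white (y : R) (c : Fin 3) : H.base (true, y) c = (H.link c).symm y := rfl

/-- The vertex of the snowflake graph at a place of the gadget `β`. -/
def position (β : Bool × R) : GadgetVertex → Vertex R :=
  Sum.map (fun c => (H.base β c, c)) (fun k => (β, k))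

/-- The face of the honeycomb bounded by the colours `c` and `c + 1` at the black vertex `x`. -/
def hexagon (c : Fin 3) (x : R) : H.Face := .inl ⟨c, Quotient.mk _ x⟩

lemma hexagon_rotation (c : Fin 3) (x : R) : H.hexagon c (H.rotation c x) = H.hexagon c x :=
  congrArg (fun o => (Sum.inl ⟨c, o⟩ : H.Face))
    (Quotient.sound (Equiv.Perm.sameCycle_apply_left.2 (Equiv.Perm.SameCycle.refl _ _)))

/-- The face of the snowflake graph at a place of the gadget `β`. -/
def faceAt (β : Bool × R) : GadgetFace → H.Face :=
  Sum.elim (fun c => H.hexagon c (H.base β c)) (fun k => .inr (β, k))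

/-- The ends of the edges of the snowflake graph. -/
def ends (e : Edge R) : Sym2 (Vertex R) := (gadgetEnds e.2).map (H.position e.1)

/-- The sides of the edges of the snowflake graph. -/
def sides (e : Edge R) : Sym2 H.Face := (gadgetSides e.2).map (H.faceAt e.1)

/-- The snowflake graph of a honeycomb: each vertex of the honeycomb is replaced by a gadget, and
the gadgets at the two ends of an edge share a contact. -/
def snowflakeGraph : SimpleGraph (Vertex R) := fromEdgeSet (Set.range H.ends)

lemma coboundary_ends (p : Vertex R → ZMod 2) (β : Bool × R) (i : GadgetEdge) :
    coboundary H.ends p (β, i) = coboundary gadgetEnds (p ∘ H.position β) i :=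
  congrFun (coboundary_map gadgetEnds (H.position β) p) i

lemma coboundary_sides (q : H.Face → ZMod 2) (β : Bool × R) (i : GadgetEdge) :
    coboundary H.sides q (β, i) = coboundary gadgetSides (q ∘ H.faceAt β) i :=
  congrFun (coboundary_map gadgetSides (H.faceAt β) q) i

lemma eq_of_coboundary_ends_eq_zero {p : Vertex R → ZMod 2} (hp : coboundary H.ends p = 0)
    (β : Bool × R) (u v : GadgetVertex) : p (H.position β u) = p (H.position β v) :=
  gadgetEnds_coboundaryConnected (p ∘ H.position β)
    (funext fun i => (H.coboundary_ends p β i).symm.trans (congrFun hp _)) u v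

lemma eq_of_coboundary_sides_eq_zero {q : H.Face → ZMod 2} (hq : coboundary H.sides q = 0)
    (β : Bool × R) (u v : GadgetFace) : q (H.faceAt β u) = q (H.faceAt β v) :=
  gadgetSides_coboundaryConnected (q ∘ H.faceAt β)
    (funext fun i => (H.coboundary_sides q β i).symm.trans (congrFun hq _)) u v

lemma eq_of_rotation_invariant {α : Type*} {f : R → α} (h : ∀ c x, f (H.rotation c x) = f x)
    (x y : R) : f x = f y := by
  have level_set := H.eq_univ_of_rotation_mem {z | f z = f y} ⟨y, rfl⟩
    fun c z hz => (h c z).trans hz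
  exact Set.eq_univ_iff_forall.1 level_set x

lemma ends_coboundaryConnected : CoboundaryConnected H.ends := by
  intro p hp
  have within := H.eq_of_coboundary_ends_eq_zero hp
  have contact (x : R) (c : Fin 3) : p (.inl (x, c)) = p (.inl (x, 0)) :=
    within (false, x) (.inl c) (.inl 0)
  have invariant (c : Fin 3) (x : R) : p (.inl (H.rotation c x, 0)) = p (.inl (x, 0)) := by
    have across := within (true, H.link (c + 1) x) (.inl c) (.inl (c + 1))
    simp only [position, Sum.map_inl, base_white, Equiv.symm_apply_apply] at across
    rw [← contact _ c, ← contact x (c + 1), ← across]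
    rfl
  have const (β : Bool × R) (u : GadgetVertex) (x : R) :
      p (H.position β u) = p (.inl (x, 0)) :=
    (within β u (.inl 0)).trans
      (H.eq_of_rotation_invariant (f := fun x => p (.inl (x, 0))) invariant (H.base β 0) x)
  have eq_base (x : R) : ∀ v, p v = p (.inl (x, 0)) :=
    Sum.rec (fun u => const (false, u.1) (.inl u.2) x) (fun u => const u.1 (.inr u.2) x)
  intro u v
  have x : R := u.elim Prod.fst fun u => u.1.2
  exact (eq_base x u).trans (eq_base x v).symm

lemma sides_coboundaryConnected : CoboundaryConnected H.sides := by
  intro q hq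
  have within := H.eq_of_coboundary_sides_eq_zero hq
  have invariant (c : Fin 3) (x : R) :
      q (H.faceAt (false, H.rotation c x) (.inl 0)) = q (H.faceAt (false, x) (.inl 0)) := by
    rw [within _ _ (.inl c), within (false, x) _ (.inl c)]
    exact congrArg q (H.hexagon_rotation c x)
  have const (β : Bool × R) (u : GadgetFace) (x : R) :
      q (H.faceAt β u) = q (H.faceAt (false, x) (.inl 0)) :=
    (within β u (.inl 0)).trans (H.eq_of_rotation_invariant
      (f := fun x => q (H.faceAt (false, x) (.inl 0))) invariant (H.base β 0) x)
  have eq_base (x : R) : ∀ κ, q κ = q (H.faceAt (false, x) (.inl 0)) := by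
    rintro (⟨c, ⟨y⟩⟩ | ⟨β, k⟩)
    exacts [const (false, y) (.inl c) x, const β (.inr k) x]
  intro κ κ'
  exact (eq_base (H.cone 0) κ).trans (eq_base (H.cone 0) κ').symm

lemma coboundary_sides_dotProduct_coboundary_ends [Fintype R] (q : H.Face → ZMod 2)
    (p : Vertex R → ZMod 2) : coboundary H.sides q ⬝ᵥ coboundary H.ends p = 0 := by
  have gadget (β : Bool × R) :
      ∑ i, coboundary H.sides q (β, i) * coboundary H.ends p (β, i) =
        ∑ c, q (H.faceAt β (.inl c)) *
          (p (H.position β (.inl c)) + p (H.position β (.inl (c + 1)))) := by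
    simp only [coboundary_sides, coboundary_ends]
    exact coboundary_gadgetSides_dotProduct_gadgetEnds _ _
  have black (c : Fin 3) :
      ∑ y, q (H.hexagon c ((H.link c).symm y)) * p (.inl ((H.link c).symm y, c)) =
        ∑ x, q (H.hexagon c x) * p (.inl (x, c)) :=
    Equiv.sum_comp (H.link c).symm fun x => q (H.hexagon c x) * p (.inl (x, c))
  have white (c : Fin 3) :
      ∑ y, q (H.hexagon c ((H.link c).symm y)) * p (.inl ((H.link (c + 1)).symm y, c + 1)) =
        ∑ x, q (H.hexagon c x) * p (.inl (x, c + 1)) := by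
    rw [← Equiv.sum_comp (H.link (c + 1))]
    refine Fintype.sum_congr _ _ fun x => ?_
    rw [Equiv.symm_apply_apply, ← H.hexagon_rotation c x]
    rfl
  rw [dotProduct, Fintype.sum_prod_type, Fintype.sum_prod_type, Fintype.sum_bool,
    Finset.sum_congr rfl fun y _ => gadget (true, y),
    Finset.sum_congr rfl fun x _ => gadget (false, x), Finset.sum_comm,
    Finset.sum_comm (s := Finset.univ (α := R)), CharTwo.add_eq_zero]
  refine Fintype.sum_congr _ _ fun c => ?_
  simp only [mul_add, Finset.sum_add_distrib]
  exact congrArg₂ (· + ·) (black c) (white c)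

lemma card_edge_add_two_le [Fintype R]
    [∀ c, Fintype (Quotient (Equiv.Perm.SameCycle.setoid (H.rotation c)))] :
    Fintype.card (Edge R) + 2 ≤ Fintype.card (Vertex R) + Fintype.card H.Face := by
  have hexagons (c : Fin 3) : Fintype.card R + 3 ≤
      3 * Fintype.card (Quotient (Equiv.Perm.SameCycle.setoid (H.rotation c))) + 1 :=
    card_add_le_mul_card_quotient_sameCycle_add_one three_pos (H.rotation_pow_three c)
      ((H.rotation_eq_self_iff c _).2 rfl)
  have := hexagons 0
  have := hexagons 1
  have := hexagons 2
  simp only [Fintype.card_sum, Fintype.card_prod, Fintype.card_bool, Fintype.card_fin,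
    Fintype.card_sigma, Fin.sum_univ_three]
  omega

lemma snowflakeGraph_isPlanar [Finite R] : IsPlanar H.snowflakeGraph := by
  classical
  have := Fintype.ofFinite R
  have : Nonempty R := ⟨H.cone 0⟩
  have := IsAbstractDual.of_euler H.coboundary_sides_dotProduct_coboundary_ends
    H.ends_coboundaryConnected H.sides_coboundaryConnected H.card_edge_add_two_le
  refine this.isPlanar ?_
  rw [snowflakeGraph, edgeSet_fromEdgeSet]
  exact Set.sdiff_subset

end Honeycomb

end Honeycomb

section BlockCover

lemma HasTheta6.exists_chord_zero {V : Type*} {G : SimpleGraph V} (h : HasTheta6 G) :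
    ∃ v : Fin 6 → V, Function.Injective v ∧ (∀ i, G.Adj (v i) (v (i + 1))) ∧
      (G.Adj (v 0) (v 2) ∨ G.Adj (v 0) (v 3)) := by
  obtain ⟨v, v_injective, cycle, i, j, hij, hij', hji', chord⟩ := h
  have rotated (i : Fin 6) : Function.Injective (fun m => v (i + m)) ∧
      ∀ m, G.Adj (v (i + m)) (v (i + (m + 1))) :=
    ⟨v_injective.comp (add_right_injective i), fun m => add_assoc i m 1 ▸ cycle (i + m)⟩
  have offset : j = i + 2 ∨ j = i + 3 ∨ i = j + 2 := by
    clear chord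
    decide +revert
  rcases offset with rfl | rfl | rfl
  · exact ⟨_, (rotated i).1, (rotated i).2, .inl (by simpa only [add_zero] using chord)⟩
  · exact ⟨_, (rotated i).1, (rotated i).2, .inr (by simpa only [add_zero] using chord)⟩
  · exact ⟨_, (rotated j).1, (rotated j).2, .inl (by simpa only [add_zero] using chord.symm)⟩

/-- A cover of the edges of `G` by two-coloured blocks such that blocks of the same colour are
disjoint, blocks sharing two vertices lie in a common cluster, and no four blocks of alternating
colours close up to a 4-cycle. This controls the cycles of length at most 5. -/
structure BlockCover {V : Type*} (G : SimpleGraph V) (ι κ : Type*) where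
  block : ι → Set V
  colour : ι → Bool
  cluster : ι → κ
  exists_block : ∀ {u v}, G.Adj u v → ∃ β, u ∈ block β ∧ v ∈ block β
  eq_of_mem : ∀ {β γ v}, colour β = colour γ → v ∈ block β → v ∈ block γ → β = γ
  cluster_eq : ∀ {β γ u v}, u ≠ v → u ∈ block β ∧ v ∈ block β → u ∈ block γ ∧ v ∈ block γ →
    cluster β = cluster γ
  not_alternating : ∀ {β₀ γ₀ β₁ γ₁ v₀ v₁ v₂ v₃}, [v₀, v₁, v₂, v₃].Nodup →
    colour β₀ = false → colour γ₀ = true → colour β₁ = false → colour γ₁ = true →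
    v₀ ∈ block β₀ ∧ v₁ ∈ block β₀ → v₁ ∈ block γ₀ ∧ v₂ ∈ block γ₀ →
    v₂ ∈ block β₁ ∧ v₃ ∈ block β₁ → ¬ (v₃ ∈ block γ₁ ∧ v₀ ∈ block γ₁)

namespace BlockCover

variable {V ι κ : Type*} {G : SimpleGraph V} (C : BlockCover G ι κ)

/-- The block `β` contains both `u` and `v`, so it can carry an edge between them. -/
def Joins (β : ι) (u v : V) : Prop := u ∈ C.block β ∧ v ∈ C.block β

variable {C}

lemma Joins.symm {β : ι} {u v : V} (h : C.Joins β u v) : C.Joins β v u := And.symm h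

lemma Joins.trans {β γ : ι} {u v w : V} (same_colour : C.colour β = C.colour γ)
    (h : C.Joins β u v) (h' : C.Joins γ v w) : β = γ ∧ C.Joins β u w := by
  obtain rfl := C.eq_of_mem same_colour h.2 h'.1
  exact ⟨rfl, h.1, h'.2⟩

lemma cluster_eq_of_triangle_of_colour_eq {β₀ β₁ β₂ : ι} {v₀ v₁ v₂ : V}
    (distinct : [v₀, v₁, v₂].Nodup) (h₀ : C.Joins β₀ v₀ v₁) (h₁ : C.Joins β₁ v₁ v₂)
    (h₂ : C.Joins β₂ v₂ v₀) (same_colour : C.colour β₀ = C.colour β₁) :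
    C.cluster β₀ = C.cluster β₁ ∧ C.cluster β₁ = C.cluster β₂ := by
  obtain ⟨rfl, merged⟩ := h₀.trans same_colour h₁
  exact ⟨rfl, C.cluster_eq (by grind) merged h₂.symm⟩

lemma cluster_eq_of_triangle {β₀ β₁ β₂ : ι} {v₀ v₁ v₂ : V} (distinct : [v₀, v₁, v₂].Nodup)
    (h₀ : C.Joins β₀ v₀ v₁) (h₁ : C.Joins β₁ v₁ v₂) (h₂ : C.Joins β₂ v₂ v₀) :
    C.cluster β₀ = C.cluster β₁ ∧ C.cluster β₁ = C.cluster β₂ := by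
  have rotated (n : ℕ) : ([v₀, v₁, v₂].rotate n).Nodup := List.nodup_rotate.2 distinct
  rcases Bool.eq_or_eq_not (C.colour β₀) (C.colour β₁) with h | h
  · exact cluster_eq_of_triangle_of_colour_eq distinct h₀ h₁ h₂ h
  rcases Bool.eq_or_eq_not (C.colour β₁) (C.colour β₂) with h₁₂ | h₁₂
  · have := cluster_eq_of_triangle_of_colour_eq (rotated 1) h₁ h₂ h₀ h₁₂
    grind
  · have := cluster_eq_of_triangle_of_colour_eq (rotated 2) h₂ h₀ h₁ (by grind)
    grind

lemma cluster_eq_of_quadrangle {β₀ β₁ β₂ β₃ : ι} {v₀ v₁ v₂ v₃ : V}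
    (distinct : [v₀, v₁, v₂, v₃].Nodup) (h₀ : C.Joins β₀ v₀ v₁) (h₁ : C.Joins β₁ v₁ v₂)
    (h₂ : C.Joins β₂ v₂ v₃) (h₃ : C.Joins β₃ v₃ v₀) :
    C.cluster β₀ = C.cluster β₁ ∧ C.cluster β₁ = C.cluster β₂ ∧ C.cluster β₂ = C.cluster β₃ := by
  rcases Bool.eq_or_eq_not (C.colour β₀) (C.colour β₁) with h | h
  · obtain ⟨rfl, merged⟩ := h₀.trans h h₁
    exact ⟨rfl, cluster_eq_of_triangle (by grind) merged h₂ h₃⟩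
  rcases Bool.eq_or_eq_not (C.colour β₁) (C.colour β₂) with h₁₂ | h₁₂
  · obtain ⟨rfl, merged⟩ := h₁.trans h₁₂ h₂
    have := cluster_eq_of_triangle (by grind) h₀ merged h₃
    exact ⟨this.1, rfl, this.2⟩
  rcases Bool.eq_or_eq_not (C.colour β₂) (C.colour β₃) with h₂₃ | h₂₃
  · obtain ⟨rfl, merged⟩ := h₂.trans h₂₃ h₃
    have := cluster_eq_of_triangle (by grind) h₀ h₁ merged
    exact ⟨this.1, this.2, rfl⟩
  cases hβ₀ : C.colour β₀
  · exact (C.not_alternating distinct hβ₀ (by grind) (by grind) (by grind) h₀ h₁ h₂ h₃).elim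
  · exact (C.not_alternating (by grind) (by grind) (by grind) (by grind) hβ₀ h₁ h₂ h₃ h₀).elim

lemma cluster_eq_of_pentagon_of_colour_eq {β₀ β₁ β₂ β₃ β₄ : ι} {v₀ v₁ v₂ v₃ v₄ : V}
    (distinct : [v₀, v₁, v₂, v₃, v₄].Nodup) (h₀ : C.Joins β₀ v₀ v₁) (h₁ : C.Joins β₁ v₁ v₂)
    (h₂ : C.Joins β₂ v₂ v₃) (h₃ : C.Joins β₃ v₃ v₄) (h₄ : C.Joins β₄ v₄ v₀)
    (same_colour : C.colour β₀ = C.colour β₁) :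
    C.cluster β₀ = C.cluster β₁ ∧ C.cluster β₁ = C.cluster β₂ ∧ C.cluster β₂ = C.cluster β₃ ∧
      C.cluster β₃ = C.cluster β₄ := by
  obtain ⟨rfl, merged⟩ := h₀.trans same_colour h₁
  exact ⟨rfl, cluster_eq_of_quadrangle (by grind) merged h₂ h₃ h₄⟩

lemma cluster_eq_of_pentagon {β₀ β₁ β₂ β₃ β₄ : ι} {v₀ v₁ v₂ v₃ v₄ : V}
    (distinct : [v₀, v₁, v₂, v₃, v₄].Nodup) (h₀ : C.Joins β₀ v₀ v₁) (h₁ : C.Joins β₁ v₁ v₂)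
    (h₂ : C.Joins β₂ v₂ v₃) (h₃ : C.Joins β₃ v₃ v₄) (h₄ : C.Joins β₄ v₄ v₀) :
    C.cluster β₀ = C.cluster β₁ ∧ C.cluster β₁ = C.cluster β₂ ∧ C.cluster β₂ = C.cluster β₃ ∧
      C.cluster β₃ = C.cluster β₄ := by
  have rotated (n : ℕ) : ([v₀, v₁, v₂, v₃, v₄].rotate n).Nodup := List.nodup_rotate.2 distinct
  rcases Bool.eq_or_eq_not (C.colour β₀) (C.colour β₁) with h | h
  · exact cluster_eq_of_pentagon_of_colour_eq distinct h₀ h₁ h₂ h₃ h₄ h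
  rcases Bool.eq_or_eq_not (C.colour β₁) (C.colour β₂) with h₁₂ | h₁₂
  · have := cluster_eq_of_pentagon_of_colour_eq (rotated 1) h₁ h₂ h₃ h₄ h₀ h₁₂
    grind
  rcases Bool.eq_or_eq_not (C.colour β₂) (C.colour β₃) with h₂₃ | h₂₃
  · have := cluster_eq_of_pentagon_of_colour_eq (rotated 2) h₂ h₃ h₄ h₀ h₁ h₂₃
    grind
  rcases Bool.eq_or_eq_not (C.colour β₃) (C.colour β₄) with h₃₄ | h₃₄
  · have := cluster_eq_of_pentagon_of_colour_eq (rotated 3) h₃ h₄ h₀ h₁ h₂ h₃₄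
    grind
  · have := cluster_eq_of_pentagon_of_colour_eq (rotated 4) h₄ h₀ h₁ h₂ h₃ (by grind)
    grind

/-- The chord splits the 6-cycle into two cycles of length at most 5 that share the block of the
chord, so all six vertices lie in one cluster. -/
lemma not_hasTheta6_induce (S : Set V)
    (small : ∀ k, (S ∩ {v | ∃ β, C.cluster β = k ∧ v ∈ C.block β}).encard ≤ 5) :
    ¬ HasTheta6 (G.induce S) := by
  intro theta
  obtain ⟨v, v_injective, cycle, chord⟩ := theta.exists_chord_zero
  have val_injective : Function.Injective fun i => (v i : V) :=
    Subtype.val_injective.comp v_injective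
  choose β joins using fun i => C.exists_block (induce_adj.1 (cycle i))
  have nodup (l : List (Fin 6)) (hl : l.Nodup) : (l.map fun i => (v i : V)).Nodup :=
    hl.map val_injective
  obtain ⟨k, one_cluster⟩ : ∃ k, ∀ i, C.cluster (β i) = k := by
    rcases chord with chord | chord <;> obtain ⟨δ, hδ⟩ := C.exists_block (induce_adj.1 chord)
    · have := cluster_eq_of_triangle (nodup [0, 1, 2] (by decide)) (joins 0) (joins 1) hδ.symm
      have := cluster_eq_of_pentagon (nodup [0, 2, 3, 4, 5] (by decide)) hδ (joins 2) (joins 3)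
        (joins 4) (joins 5)
      exact ⟨C.cluster δ, fun i => by fin_cases i <;> grind⟩
    · have := cluster_eq_of_quadrangle (nodup [0, 1, 2, 3] (by decide)) (joins 0) (joins 1)
        (joins 2) hδ.symm
      have := cluster_eq_of_quadrangle (nodup [0, 3, 4, 5] (by decide)) hδ (joins 3) (joins 4)
        (joins 5)
      exact ⟨C.cluster δ, fun i => by fin_cases i <;> grind⟩
  have range_subset : Set.range (fun i => (v i : V)) ⊆
      S ∩ {v | ∃ β, C.cluster β = k ∧ v ∈ C.block β} :=
    Set.range_subset_iff.2 fun i => ⟨(v i).2, β i, one_cluster i, (joins i).1⟩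
  have six_le := val_injective.encard_range.trans (Set.encard_mono range_subset)
  rw [ENat.card_eq_coe_fintype_card, Fintype.card_fin] at six_le
  exact absurd (six_le.trans (small k)) (by decide)

end BlockCover

end BlockCover

section Pruning

lemma gadgetEnds_injective : Function.Injective gadgetEnds := by decide

lemma not_isDiag_gadgetEnds (i : GadgetEdge) : ¬ (gadgetEnds i).IsDiag := by
  decide +revert

lemma eq_or_eq_add_one_or_add_one_eq (a b : Fin 3) : a = b ∨ a = b + 1 ∨ b = a + 1 := by
  decide +revert

namespace Honeycomb

variable {R : Type*} (H : Honeycomb R)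

lemma rotation_eq_iff {c : Fin 3} {x x' : R} :
    H.rotation c x = x' ↔ H.link (c + 1) x = H.link c x' := by
  rw [← H.link_rotation, (H.link c).injective.eq_iff]

lemma eq_cone_iff {c : Fin 3} {x : R} : x = H.cone c ↔ H.link (c + 1) x = H.link c x := by
  rw [← H.rotation_eq_self_iff, rotation_eq_iff]

/-- The white vertex of the digon of the colours `c` and `c + 1`. -/
def tip (c : Fin 3) : R := H.link c (H.cone c)

lemma cone_injective : Function.Injective H.cone := by
  intro a b h
  by_contra hab
  apply H.rotation_ne a b hab (H.cone a)
  rw [(H.rotation_eq_self_iff a _).2 rfl, (H.rotation_eq_self_iff b _).2 h]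

lemma tip_injective : Function.Injective H.tip := by
  intro a b h
  have link_succ (c : Fin 3) : H.link (c + 1) (H.cone c) = H.tip c := H.eq_cone_iff.1 rfl
  apply H.cone_injective
  rcases eq_or_eq_add_one_or_add_one_eq a b with rfl | rfl | rfl
  · rfl
  · exact (H.link (b + 1)).injective (h.trans (link_succ b).symm)
  · exact (H.link (a + 1)).injective ((link_succ a).trans h)

lemma exists_cone_of_link_eq {a b : Fin 3} {x y : R} (hab : a ≠ b) (ha : H.link a x = y)
    (hb : H.link b x = y) : ∃ c, x = H.cone c ∧ y = H.tip c ∧ s(a, b) = s(c, c + 1) := by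
  rcases eq_or_eq_add_one_or_add_one_eq a b with rfl | rfl | rfl
  · exact (hab rfl).elim
  · have hx : x = H.cone b := H.eq_cone_iff.2 (ha.trans hb.symm)
    exact ⟨b, hx, by rw [← hb, hx, tip], Sym2.eq_swap⟩
  · have hx : x = H.cone a := H.eq_cone_iff.2 (hb.trans ha.symm)
    exact ⟨a, hx, by rw [← ha, hx, tip], rfl⟩

/-- Each of the two paths is a step of a rotation, from `x` to `x'` or back. Two steps in the same
direction contradict `rotation_ne`; two steps in opposite directions belong to the same rotation,
whose square then fixes `x`. -/
lemma eq_of_two_paths {p q p' q' : Fin 3} {x x' : R} (hp : p ≠ p') (hq : q ≠ q')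
    (h : H.link p x = H.link q x') (h' : H.link p' x = H.link q' x') : x = x' := by
  have direction {p q : Fin 3} (h : H.link p x = H.link q x') :
      x = x' ∨ p = q + 1 ∧ H.rotation q x = x' ∨ q = p + 1 ∧ H.rotation p x' = x := by
    rcases eq_or_eq_add_one_or_add_one_eq p q with rfl | rfl | rfl
    exacts [.inl ((H.link p).injective h), .inr (.inl ⟨rfl, H.rotation_eq_iff.2 h⟩),
      .inr (.inr ⟨rfl, H.rotation_eq_iff.2 h.symm⟩)]
  have back_and_forth {c : Fin 3} (forth : H.rotation c x = x') (back : H.rotation c x' = x) :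
      x = x' := by
    have cubed : H.rotation c (H.rotation c (H.rotation c x)) = x :=
      DFunLike.congr_fun (H.rotation_pow_three c) x
    rw [forth, back, forth] at cubed
    exact cubed.symm
  rcases direction h with h | ⟨hpq, h⟩ | ⟨hpq, h⟩
  · exact h
  all_goals rcases direction h' with h' | ⟨hpq', h'⟩ | ⟨hpq', h'⟩
  · exact h'
  · exact (H.rotation_ne q q' hq x (h.trans h'.symm)).elim
  · obtain rfl : q = p' := by grind
    exact back_and_forth h h'
  · exact h'
  · obtain rfl : p = q' := by grind
    exact back_and_forth h' h
  · exact (H.rotation_ne p p' hp x' (h.trans h'.symm)).elim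

/-- The vertices of the gadget that replaces the vertex `β` of the honeycomb. -/
def block (β : Bool × R) : Set (Vertex R) := Set.range (H.position β)

lemma inl_mem_block {β : Bool × R} {x : R} {c : Fin 3} :
    .inl (x, c) ∈ H.block β ↔ H.base β c = x := by
  simp [block, position]

lemma inr_mem_block {β γ : Bool × R} {k : Fin 2} : .inr (γ, k) ∈ H.block β ↔ β = γ := by
  simp [block, position]

lemma base_white_eq_iff {c : Fin 3} {x y : R} : H.base (true, y) c = x ↔ H.link c x = y := by
  rw [base_white, Equiv.symm_apply_eq, eq_comm]

lemma exists_contact {x y : R} {v : Vertex R} (black : v ∈ H.block (false, x))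
    (white : v ∈ H.block (true, y)) : ∃ c, v = .inl (x, c) ∧ H.link c x = y := by
  obtain ⟨z, c⟩ | ⟨γ, k⟩ := v
  · obtain rfl : x = z := H.inl_mem_block.1 black
    exact ⟨c, rfl, H.base_white_eq_iff.1 (H.inl_mem_block.1 white)⟩
  · have colours := (H.inr_mem_block.1 black).trans (H.inr_mem_block.1 white).symm
    exact (Bool.false_ne_true (congrArg Prod.fst colours)).elim

lemma eq_of_mem_block {β γ : Bool × R} {v : Vertex R} (same_colour : β.1 = γ.1)
    (hβ : v ∈ H.block β) (hγ : v ∈ H.block γ) : β = γ := by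
  obtain ⟨x, c⟩ | ⟨δ, k⟩ := v
  · obtain ⟨b, z⟩ := β
    obtain ⟨b', z'⟩ := γ
    obtain rfl : b = b' := same_colour
    have base_eq := (H.inl_mem_block.1 hβ).trans (H.inl_mem_block.1 hγ).symm
    cases b
    · exact congrArg (Prod.mk false) base_eq
    · exact congrArg (Prod.mk true) ((H.link c).symm.injective base_eq)
  · exact (H.inr_mem_block.1 hβ).trans (H.inr_mem_block.1 hγ).symm

lemma exists_cone_of_mem_block {x y : R} {u v : Vertex R} (huv : u ≠ v)
    (hu : u ∈ H.block (false, x)) (hv : v ∈ H.block (false, x)) (hu' : u ∈ H.block (true, y))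
    (hv' : v ∈ H.block (true, y)) : ∃ c, x = H.cone c ∧ y = H.tip c := by
  obtain ⟨a, rfl, ha⟩ := H.exists_contact hu hu'
  obtain ⟨b, rfl, hb⟩ := H.exists_contact hv hv'
  obtain ⟨c, hx, hy, -⟩ := H.exists_cone_of_link_eq (fun hab => huv (by rw [hab])) ha hb
  exact ⟨c, hx, hy⟩

lemma exists_ends_of_adj {u v : Vertex R} (h : H.snowflakeGraph.Adj u v) :
    ∃ e, H.ends e = s(u, v) := h.1

lemma mem_block_of_mem_ends {e : Edge R} {v : Vertex R} (hv : v ∈ H.ends e) :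
    v ∈ H.block e.1 := by
  obtain ⟨u, -, rfl⟩ := Sym2.mem_map.1 hv
  exact ⟨u, rfl⟩

/-- The cluster of a gadget is named after a vertex of the honeycomb: the gadgets of the two
vertices of a digon share two contacts and form one cluster, named after the black vertex. -/
noncomputable def cluster : Bool × R → Bool × R
  | (false, x) => (false, x)
  | (true, y) => Function.extend H.tip (fun c => (false, H.cone c)) (fun y => (true, y)) y

lemma cluster_tip (c : Fin 3) : H.cluster (true, H.tip c) = (false, H.cone c) := by
  rw [cluster, H.tip_injective.extend_apply]

lemma cluster_of_notMem_range_tip {y : R} (hy : y ∉ Set.range H.tip) :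
    H.cluster (true, y) = (true, y) := by
  rw [cluster, Function.extend_apply' _ _ _ hy]

/-- The gadgets as blocks of the snowflake graph. -/
noncomputable def blockCover : BlockCover H.snowflakeGraph (Bool × R) (Bool × R) where
  block := H.block
  colour := Prod.fst
  cluster := H.cluster
  exists_block h := by
    obtain ⟨e, he⟩ := H.exists_ends_of_adj h
    exact ⟨e.1, H.mem_block_of_mem_ends (he ▸ Sym2.mem_mk_left _ _),
      H.mem_block_of_mem_ends (he ▸ Sym2.mem_mk_right _ _)⟩
  eq_of_mem := H.eq_of_mem_block
  cluster_eq := by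
    rintro ⟨b, x⟩ ⟨b', y⟩ u v huv hβ hγ
    by_cases same_colour : b = b'
    · rw [H.eq_of_mem_block same_colour hβ.1 hγ.1]
    cases b <;> cases b' <;> try exact (same_colour rfl).elim
    · obtain ⟨c, rfl, rfl⟩ := H.exists_cone_of_mem_block huv hβ.1 hβ.2 hγ.1 hγ.2
      exact (H.cluster_tip c).symm
    · obtain ⟨c, rfl, rfl⟩ := H.exists_cone_of_mem_block huv hγ.1 hγ.2 hβ.1 hβ.2
      exact H.cluster_tip c
  not_alternating := by
    rintro ⟨_, x⟩ ⟨_, y⟩ ⟨_, x'⟩ ⟨_, y'⟩ v₀ v₁ v₂ v₃ distinct rfl rfl rfl rfl h₀ h₁ h₂ h₃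
    obtain ⟨c₀, rfl, hc₀⟩ := H.exists_contact h₀.1 h₃.2
    obtain ⟨c₁, rfl, hc₁⟩ := H.exists_contact h₀.2 h₁.1
    obtain ⟨c₂, rfl, hc₂⟩ := H.exists_contact h₂.1 h₁.2
    obtain ⟨c₃, rfl, hc₃⟩ := H.exists_contact h₂.2 h₃.1
    obtain rfl := H.eq_of_two_paths (p := c₀) (p' := c₁) (q := c₃) (q' := c₂) (by grind) (by grind)
      (hc₀.trans hc₃.symm) (hc₁.trans hc₂.symm)
    have four_colours : [c₀, c₁, c₂, c₃].Nodup :=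
      List.Nodup.of_map (fun c => (Sum.inl (x, c) : Vertex R)) distinct
    exact absurd four_colours.length_le_card (by simp)

end Honeycomb

end Pruning

section Counting

lemma ncard_edgeSet_induce {V : Type*} (G : SimpleGraph V) (S : Set V) :
    (G.induce S).edgeSet.ncard = {e ∈ G.edgeSet | ∀ v ∈ e, v ∈ S}.ncard := by
  rw [← Set.ncard_image_of_injective _ (Sym2.map.injective Subtype.val_injective)]
  congr 1
  ext e
  induction e with | h u v
  constructor
  · rintro ⟨e, he, h⟩
    induction e with | h u' v'
    rw [Sym2.map_mk] at h
    rw [← h]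
    exact ⟨he, by simp⟩
  · rintro ⟨he, mem⟩
    exact ⟨s(⟨u, mem u (Sym2.mem_mk_left u v)⟩, ⟨v, mem v (Sym2.mem_mk_right u v)⟩), he, rfl⟩

lemma ncard_edgeSet_eq_of_iso {V W : Type*} {G : SimpleGraph V} {G' : SimpleGraph W}
    (f : G ≃g G') : G.edgeSet.ncard = G'.edgeSet.ncard :=
  Nat.card_congr f.mapEdgeSet

lemma encard_range_gadgetVertex_le {α : Type*} (f : GadgetVertex → α) :
    (Set.range f).encard ≤ 5 := by
  rw [← Set.image_univ]
  refine (Set.encard_image_le _ _).trans_eq ?_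
  rw [Set.encard_univ, ENat.card_eq_coe_fintype_card]
  rfl

namespace Honeycomb

variable {R : Type*} (H : Honeycomb R)

/-- The vertices removed from the snowflake graph: at each digon, one private vertex of the black
gadget and both private vertices of the white gadget. -/
def removedVertex (i : Fin 3 × Fin 3) : Vertex R :=
  .inr (![((false, H.cone i.1), 1), ((true, H.tip i.1), 0), ((true, H.tip i.1), 1)] i.2)

/-- The vertices that are kept. -/
def survivors : Set (Vertex R) := (Set.range H.removedVertex)ᶜ

/-- The edges that do not contribute to the pruned graph: at each digon, the edges at a removed
vertex, and the edge of the white gadget that is parallel to an edge of the black one. -/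
def removedEdge : Fin 3 × (Unit ⊕ (Fin 3 ⊕ Fin 3) ⊕ Fin 3) → Edge R
  | (c, .inl ()) => ((true, H.tip c), .inl c)
  | (c, .inr (.inl j)) => ((true, H.tip c), .inr j)
  | (c, .inr (.inr k)) => ((false, H.cone c), .inr (.inr k))

/-- The snowflake graph with the surplus vertices at the digons removed. -/
def prunedGraph : SimpleGraph H.survivors := H.snowflakeGraph.induce H.survivors

lemma removedVertex_injective : Function.Injective H.removedVertex := by
  rintro ⟨a, k⟩ ⟨b, l⟩ h
  fin_cases k <;> fin_cases l <;>
    simp_all [removedVertex, H.tip_injective.eq_iff, H.cone_injective.eq_iff]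

lemma removedEdge_injective : Function.Injective H.removedEdge := by
  rintro ⟨a, ⟨⟩ | j | k⟩ ⟨b, ⟨⟩ | j' | k'⟩ h <;>
    simp_all [removedEdge, H.tip_injective.eq_iff, H.cone_injective.eq_iff]

lemma position_injective (β : Bool × R) : Function.Injective (H.position β) :=
  Sum.map_injective.2 ⟨fun _ _ h => congrArg Prod.snd h, Prod.mk_right_injective β⟩

lemma not_isDiag_ends (e : Edge R) : ¬ (H.ends e).IsDiag := by
  rw [ends, Sym2.isDiag_map (H.position_injective _)]
  exact not_isDiag_gadgetEnds e.2

lemma edgeSet_snowflakeGraph : H.snowflakeGraph.edgeSet = Set.range H.ends := by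
  rw [snowflakeGraph, edgeSet_fromEdgeSet, sdiff_eq_left, Set.disjoint_left]
  rintro _ ⟨e, rfl⟩
  exact H.not_isDiag_ends e

lemma ends_gadget_injective (β : Bool × R) : Function.Injective fun i => H.ends (β, i) :=
  (Sym2.map.injective (H.position_injective β)).comp gadgetEnds_injective

lemma ends_contact_edge_black (x : R) (c : Fin 3) :
    H.ends ((false, x), .inl c) = s(.inl (x, c), .inl (x, c + 1)) := rfl

lemma base_tip (c : Fin 3) : H.base (true, H.tip c) c = H.cone c :=
  H.base_white_eq_iff.2 rfl

lemma base_tip_add_one (c : Fin 3) : H.base (true, H.tip c) (c + 1) = H.cone c :=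
  H.base_white_eq_iff.2 (H.eq_cone_iff.1 rfl)

lemma ends_parallel (c : Fin 3) :
    H.ends ((true, H.tip c), .inl c) = H.ends ((false, H.cone c), .inl c) := by
  rw [ends_contact_edge_black]
  exact congrArg₂ (fun x y => s(Sum.inl (x, c), Sum.inl (y, c + 1)))
    (H.base_tip c) (H.base_tip_add_one c)

lemma exists_cone_of_ends_eq {x y : R} {i j : GadgetEdge}
    (h : H.ends ((false, x), i) = H.ends ((true, y), j)) :
    ∃ c, ((true, y), j) = H.removedEdge (c, .inl ()) := by
  obtain ⟨u, v, huv⟩ : ∃ u v, H.ends ((true, y), j) = s(u, v) := Sym2.exists.1 ⟨_, rfl⟩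
  have hne : u ≠ v := by
    rintro rfl
    exact H.not_isDiag_ends ((true, y), j) (huv ▸ Sym2.mk_isDiag_iff.2 rfl)
  have contact {w : Vertex R} (hw : w ∈ H.ends ((true, y), j)) :=
    H.exists_contact (H.mem_block_of_mem_ends (h ▸ hw)) (H.mem_block_of_mem_ends hw)
  obtain ⟨a, rfl, ha⟩ := contact (huv ▸ Sym2.mem_mk_left u v)
  obtain ⟨b, rfl, hb⟩ := contact (huv ▸ Sym2.mem_mk_right _ v)
  obtain ⟨c, rfl, rfl, hab⟩ := H.exists_cone_of_link_eq (fun h => hne (by rw [h])) ha hb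
  have parallel : H.ends ((true, H.tip c), j) = H.ends ((true, H.tip c), .inl c) := by
    rw [huv, ends_parallel, ends_contact_edge_black]
    exact congrArg (Sym2.map fun d => (Sum.inl (H.cone c, d) : Vertex R)) hab
  exact ⟨c, congrArg (Prod.mk _) (H.ends_gadget_injective _ parallel)⟩

lemma ends_injOn : Set.InjOn H.ends (Set.range H.removedEdge)ᶜ := by
  rintro ⟨⟨b, x⟩, i⟩ he ⟨⟨b', x'⟩, i'⟩ he' h
  by_cases same_colour : b = b'
  · obtain ⟨v, hv⟩ : ∃ v, v ∈ H.ends ((b, x), i) := ⟨_, Sym2.out_fst_mem _⟩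
    obtain rfl : b = b' := same_colour
    obtain hx := H.eq_of_mem_block (β := (b, x)) (γ := (b, x')) rfl (H.mem_block_of_mem_ends hv)
      (H.mem_block_of_mem_ends (h ▸ hv))
    rw [hx] at h ⊢
    exact congrArg (Prod.mk _) (H.ends_gadget_injective _ h)
  cases b <;> cases b' <;> try exact (same_colour rfl).elim
  · obtain ⟨c, hc⟩ := H.exists_cone_of_ends_eq h
    exact (he' ⟨_, hc.symm⟩).elim
  · obtain ⟨c, hc⟩ := H.exists_cone_of_ends_eq h.symm
    exact (he ⟨_, hc.symm⟩).elim

lemma inr_mem_ends {e : Edge R} {β : Bool × R} {k : Fin 2} :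
    .inr (β, k) ∈ H.ends e ↔ e.1 = β ∧ .inr k ∈ gadgetEnds e.2 := by
  constructor
  · intro h
    obtain ⟨u | l, hu, h⟩ := Sym2.mem_map.1 h
    · exact (Sum.inl_ne_inr h).elim
    · obtain ⟨rfl, rfl⟩ := Prod.mk.inj (Sum.inr.inj h)
      exact ⟨rfl, hu⟩
  · rintro ⟨rfl, h⟩
    exact Sym2.mem_map.2 ⟨_, h, rfl⟩

lemma exists_removedVertex_mem_ends_iff {e : Edge R} :
    (∃ i, H.removedVertex i ∈ H.ends e) ↔ ∃ c s, H.removedEdge (c, .inr s) = e := by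
  have spoke : ∀ i k, .inr k ∈ gadgetEnds i → ∃ j, i = .inr j := by decide
  have spoke_one : ∀ i, .inr 1 ∈ gadgetEnds i → ∃ j, i = .inr (.inr j) := by decide
  have spoke_exists : ∀ j, .inr 0 ∈ gadgetEnds (.inr j) ∨ .inr 1 ∈ gadgetEnds (.inr j) := by decide
  have spoke_one_mem : ∀ k, .inr 1 ∈ gadgetEnds (.inr (.inr k)) := by decide
  obtain ⟨β, i⟩ := e
  constructor
  · rintro ⟨⟨c, k⟩, h⟩
    fin_cases k
    all_goals obtain ⟨hβ, hi⟩ := H.inr_mem_ends.1 h; obtain rfl : β = _ := hβ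
    · obtain ⟨j, rfl⟩ := spoke_one i hi
      exact ⟨c, .inr j, rfl⟩
    all_goals
      obtain ⟨j, rfl⟩ := spoke i _ hi
      exact ⟨c, .inl j, rfl⟩
  · rintro ⟨c, j | k, h⟩ <;> obtain ⟨rfl, rfl⟩ := Prod.mk.inj h
    · rcases spoke_exists j with hj | hj
      · exact ⟨(c, 1), H.inr_mem_ends.2 ⟨rfl, hj⟩⟩
      · exact ⟨(c, 2), H.inr_mem_ends.2 ⟨rfl, hj⟩⟩
    · exact ⟨(c, 0), H.inr_mem_ends.2 ⟨rfl, spoke_one_mem k⟩⟩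

lemma setOf_mem_survivors_eq_image_ends :
    {e ∈ H.snowflakeGraph.edgeSet | ∀ v ∈ e, v ∈ H.survivors} =
      H.ends '' (Set.range H.removedEdge)ᶜ := by
  have survives_iff (e : Edge R) : (∀ v ∈ H.ends e, v ∈ H.survivors) ↔
      ¬ ∃ c s, H.removedEdge (c, .inr s) = e := by
    rw [← exists_removedVertex_mem_ends_iff]
    exact ⟨fun h ⟨i, hi⟩ => h _ hi ⟨i, rfl⟩, fun h v hv ⟨i, hi⟩ => h ⟨i, hi ▸ hv⟩⟩
  rw [edgeSet_snowflakeGraph]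
  ext a
  constructor
  · rintro ⟨⟨e, rfl⟩, h⟩
    by_cases he : e ∈ Set.range H.removedEdge
    · obtain ⟨⟨c, ⟨⟩ | s⟩, rfl⟩ := he
      · refine ⟨((false, H.cone c), .inl c), ?_, (H.ends_parallel c).symm⟩
        rintro ⟨⟨d, ⟨⟩ | j | k⟩, hd⟩ <;> simp [removedEdge] at hd
      · exact ((survives_iff _).1 h ⟨c, s, rfl⟩).elim
    · exact ⟨e, he, rfl⟩
  · rintro ⟨e, he, rfl⟩
    exact ⟨⟨e, rfl⟩, (survives_iff e).2 fun ⟨c, s, h⟩ => he ⟨_, h⟩⟩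

lemma ncard_edgeSet_prunedGraph_add [Finite R] :
    H.prunedGraph.edgeSet.ncard + 30 = 18 * Nat.card R := by
  have := Fintype.ofFinite R
  rw [prunedGraph, ncard_edgeSet_induce, setOf_mem_survivors_eq_image_ends,
    H.ends_injOn.ncard_image]
  have complement := Set.ncard_add_ncard_compl (Set.range H.removedEdge)
  rw [Set.ncard_range_of_injective H.removedEdge_injective] at complement
  simp only [Nat.card_eq_fintype_card, Fintype.card_prod, Fintype.card_sum, Fintype.card_fin,
    Fintype.card_unit, Fintype.card_bool] at complement ⊢
  omega

lemma card_survivors_add [Finite R] : Nat.card H.survivors + 9 = 7 * Nat.card R := by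
  classical
  have := Fintype.ofFinite R
  have complement := Set.ncard_add_ncard_compl (Set.range H.removedVertex)
  rw [Set.ncard_range_of_injective H.removedVertex_injective] at complement
  change Nat.card (Fin 3 × Fin 3) + Nat.card H.survivors = _ at complement
  simp only [Nat.card_eq_fintype_card, Fintype.card_prod, Fintype.card_sum, Fintype.card_fin,
    Fintype.card_bool] at complement ⊢
  omega

lemma cluster_eq_cone_iff {β : Bool × R} {c : Fin 3} :
    H.cluster β = (false, H.cone c) ↔ β = (false, H.cone c) ∨ β = (true, H.tip c) := by
  obtain ⟨_ | _, y⟩ := β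
  · simp [cluster]
  by_cases hy : y ∈ Set.range H.tip
  · obtain ⟨d, rfl⟩ := hy
    simp [H.cluster_tip, H.cone_injective.eq_iff, H.tip_injective.eq_iff]
  · rw [H.cluster_of_notMem_range_tip hy]
    have : y ≠ H.tip c := fun h => hy ⟨c, h.symm⟩
    simp [this]

lemma cluster_eq_self_of_not_cone {β k : Bool × R} (hk : ∀ c, k ≠ (false, H.cone c))
    (h : H.cluster β = k) : β = k := by
  obtain ⟨_ | _, y⟩ := β
  · exact h
  by_cases hy : y ∈ Set.range H.tip
  · obtain ⟨c, rfl⟩ := hy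
    exact (hk c (h.symm.trans (H.cluster_tip c))).elim
  · rwa [H.cluster_of_notMem_range_tip hy] at h

/-- The five surviving vertices of the two gadgets at a digon are the contacts of the black one, its
remaining private vertex, and the contact of the white one that is not shared. -/
lemma encard_survivors_cluster_le (k : Bool × R) :
    (H.survivors ∩ {v | ∃ β, H.cluster β = k ∧ v ∈ H.block β}).encard ≤ 5 := by
  by_cases hk : ∃ c, k = (false, H.cone c)
  · obtain ⟨c, rfl⟩ := hk
    refine (Set.encard_mono ?_).trans (encard_range_gadgetVertex_le (Sum.elim
      (fun a => .inl (H.cone c, a))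
      ![.inr ((false, H.cone c), 0), .inl (H.base (true, H.tip c) (c + 2), c + 2)]))
    rintro v ⟨survives, β, hβ, u, rfl⟩
    have not_removed (i) : H.position β u ≠ H.removedVertex i := fun h => survives ⟨i, h.symm⟩
    rcases H.cluster_eq_cone_iff.1 hβ with rfl | rfl <;> rcases u with d | l
    · exact ⟨.inl d, rfl⟩
    · fin_cases l
      · exact ⟨.inr 0, rfl⟩
      · exact (not_removed (c, 0) rfl).elim
    · obtain rfl | rfl | rfl : d = c ∨ d = c + 1 ∨ d = c + 2 := by
        clear * -
        decide +revert
      · exact ⟨.inl d, congrArg (fun x => (.inl (x, d) : Vertex R)) (H.base_tip d).symm⟩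
      · exact ⟨.inl (c + 1), congrArg (fun x => (.inl (x, c + 1) : Vertex R))
          (H.base_tip_add_one c).symm⟩
      · exact ⟨.inr 1, rfl⟩
    · fin_cases l
      · exact (not_removed (c, 1) rfl).elim
      · exact (not_removed (c, 2) rfl).elim
  · rw [not_exists] at hk
    refine (Set.encard_mono ?_).trans (encard_range_gadgetVertex_le (H.position k))
    rintro v ⟨-, β, hβ, hv⟩
    rwa [← H.cluster_eq_self_of_not_cone hk hβ]

end Honeycomb

lemma Honeycomb.exists_extremal_graph {R : Type*} [Finite R] (H : Honeycomb R) {n : ℕ}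
    (hn : n + 9 = 7 * Nat.card R) :
    ∃ G : SimpleGraph (Fin n), IsPlanar G ∧ ¬ HasTheta6 G ∧
      G.edgeSet.ncard + 30 = 18 * Nat.card R := by
  classical
  have := Fintype.ofFinite H.survivors
  have card : Fintype.card H.survivors = n := by
    have := H.card_survivors_add
    rw [Nat.card_eq_fintype_card] at this
    omega
  let iso := H.prunedGraph.overFinIso card
  have planar : IsPlanar H.prunedGraph :=
    H.snowflakeGraph_isPlanar.mono (Embedding.induce H.survivors).isContained
  have theta_free : ¬ HasTheta6 H.prunedGraph :=
    H.blockCover.not_hasTheta6_induce H.survivors H.encard_survivors_cluster_le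
  refine ⟨_, planar.mono iso.isContained', fun h => theta_free (h.mono iso.isContained'), ?_⟩
  rw [← ncard_edgeSet_eq_of_iso iso, H.ncard_edgeSet_prunedGraph_add]

end Counting

section Eisenstein

variable {N : ℕ} {g u : ZMod N}

/-- A root of the third cyclotomic polynomial, as a unit. -/
def cubeRootUnit (hg : g ^ 2 + g + 1 = 0) : (ZMod N)ˣ where
  val := g
  inv := g ^ 2
  val_inv := by linear_combination (g - 1) * hg
  inv_val := by linear_combination (g - 1) * hg

/-- The links of the Eisenstein honeycomb: they act as multiplication by the powers of a cube root
of unity `g`, up to a translation that moves one of the three centres of rotation off `0`. -/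
def eisensteinLink (hg : g ^ 2 + g + 1 = 0) : Fin 3 → Equiv.Perm (ZMod N) :=
  ![1, (cubeRootUnit hg).mulLeft, (cubeRootUnit hg)⁻¹.mulLeft.trans (Equiv.addRight 1)]

lemma hexagonRotation_eisensteinLink (hg : g ^ 2 + g + 1 = 0) (c : Fin 3) (x : ZMod N) :
    hexagonRotation (eisensteinLink hg) c x = g * x + ![0, g ^ 2, -g] c := by
  rw [hexagonRotation, Equiv.trans_apply, Equiv.symm_apply_eq]
  fin_cases c
  · change g * x = g * x + 0
    ring
  · change g ^ 2 * x + 1 = g * (g * x + g ^ 2)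
    linear_combination (1 - g) * hg
  · change x = g ^ 2 * (g * x + -g) + 1
    linear_combination (1 - g) * (x - 1) * hg

lemma injective_hexagonRotation_translation [Fact (1 < N)] (hg : g ^ 2 + g + 1 = 0) :
    Function.Injective ![0, g ^ 2, -g] := by
  have zero_ne_sq : 0 ≠ g ^ 2 := (cubeRootUnit hg)⁻¹.ne_zero.symm
  have zero_ne_neg : 0 ≠ -g := (neg_ne_zero.2 (cubeRootUnit hg).ne_zero).symm
  have sq_ne_neg : g ^ 2 ≠ -g := fun h => one_ne_zero (α := ZMod N) (by linear_combination hg - h)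
  intro a b h
  fin_cases a <;> fin_cases b
  exacts [rfl, (zero_ne_sq h).elim, (zero_ne_neg h).elim, (zero_ne_sq h.symm).elim, rfl,
    (sq_ne_neg h).elim, (zero_ne_neg h.symm).elim, (sq_ne_neg h.symm).elim, rfl]

lemma eq_univ_of_hexagonRotation_eisensteinLink_mem [NeZero N] (hg : g ^ 2 + g + 1 = 0)
    {s : Set (ZMod N)} (nonempty : s.Nonempty)
    (invariant : ∀ c, ∀ x ∈ s, hexagonRotation (eisensteinLink hg) c x ∈ s) : s = Set.univ := by
  obtain ⟨x, hx⟩ := nonempty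
  have add_one_mem {y : ZMod N} (hy : y ∈ s) : y + 1 ∈ s := by
    convert invariant 2 _ (invariant 2 _ (invariant 0 _ hy)) using 1
    simp only [hexagonRotation_eisensteinLink, Matrix.cons_val]
    linear_combination ((1 - g) * y + 1) * hg
  have add_natCast_mem (n : ℕ) : x + n ∈ s := by
    induction n with
    | zero => rwa [Nat.cast_zero, add_zero]
    | succ n ih => rw [Nat.cast_succ, ← add_assoc]; exact add_one_mem ih
  refine Set.eq_univ_of_forall fun y => ?_
  obtain ⟨n, hn⟩ := ZMod.natCast_zmod_surjective (y - x)
  rw [← add_sub_cancel x y, ← hn]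
  exact add_natCast_mem n

/-- The honeycomb of the Eisenstein integers modulo an ideal whose quotient ring is cyclic, divided
by the rotations of order three: `g` is the class of a primitive cube root of unity, and the three
cones are the centres of rotation. -/
def eisensteinHoneycomb [Fact (1 < N)] (hg : g ^ 2 + g + 1 = 0) (hu : (1 - g) * u = 1) :
    Honeycomb (ZMod N) where
  link := eisensteinLink hg
  cone c := u * ![0, g ^ 2, -g] c
  rotation_pow_three c := by
    ext1 x
    simp only [pow_three (hexagonRotation _ c), Equiv.Perm.mul_apply, Equiv.Perm.one_apply,
      hexagonRotation_eisensteinLink]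
    linear_combination ((g - 1) * x + ![0, g ^ 2, -g] c) * hg
  rotation_eq_self_iff c x := by
    rw [hexagonRotation_eisensteinLink]
    constructor
    · intro h
      linear_combination (-x) * hu - u * h
    · rintro rfl
      linear_combination (-![0, g ^ 2, -g] c) * hu
  rotation_ne a b hab x := by
    rw [hexagonRotation_eisensteinLink, hexagonRotation_eisensteinLink, Ne, add_right_inj]
    exact (injective_hexagonRotation_translation hg).ne hab
  eq_univ_of_rotation_mem _ nonempty invariant :=
    have : NeZero N := ⟨(zero_lt_one.trans Fact.out).ne'⟩
    eq_univ_of_hexagonRotation_eisensteinLink_mem hg nonempty invariant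

lemma nonempty_honeycomb_zmod {M t : ℕ} (ht : 0 < t) (hM : M = 9 * t ^ 2 + 3 * t + 1) :
    Nonempty (Honeycomb (ZMod M)) := by
  have : Fact (1 < M) := ⟨by lia⟩
  have norm_eq_zero : 9 * (t : ZMod M) ^ 2 + 3 * t + 1 = 0 := by
    exact_mod_cast (ZMod.natCast_eq_zero_iff _ M).2 hM.dvd
  have cube_root : (3 * t : ZMod M) ^ 2 + 3 * t + 1 = 0 := by
    linear_combination norm_eq_zero
  have one_sub_unit : (1 - 3 * t : ZMod M) * -(t * (1 + 3 * t) * (2 + 3 * t)) = 1 := by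
    linear_combination (3 * (t : ZMod M) ^ 2 + t - 1) * norm_eq_zero
  exact ⟨eisensteinHoneycomb cube_root one_sub_unit⟩

end Eisenstein

/-- There exist infinitely many `n` admitting an `n`-vertex planar graph with no
Theta graph on 6 vertices and exactly `18n/7 - 48/7` edges. -/
theorem theta6_extremal_construction :
    ∀ N : ℕ, ∃ n : ℕ, N ≤ n ∧ ∃ G : SimpleGraph (Fin n),
      IsPlanar G ∧ ¬ HasTheta6 G ∧
        (G.edgeSet.ncard : ℚ) = 18 / 7 * n - 48 / 7 := by
  intro N
  obtain ⟨M, hM⟩ : ∃ M, M = 9 * (N + 1) ^ 2 + 3 * (N + 1) + 1 := ⟨_, rfl⟩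
  have : NeZero M := ⟨by lia⟩
  obtain ⟨H⟩ := nonempty_honeycomb_zmod N.succ_pos hM
  obtain ⟨n, hn⟩ : ∃ n, n + 9 = 7 * M := ⟨7 * M - 9, Nat.sub_add_cancel (by nlinarith)⟩
  obtain ⟨G, planar, theta_free, edges⟩ :=
    H.exists_extremal_graph (hn.trans (congrArg _ (Nat.card_zmod M).symm))
  rw [Nat.card_zmod] at edges
  refine ⟨n, by nlinarith, G, planar, theta_free, ?_⟩
  have vertices_cast : (n : ℚ) + 9 = 7 * M := by exact_mod_cast hn
  have edges_cast : (G.edgeSet.ncard : ℚ) + 30 = 18 * M := by exact_mod_cast edges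
  linarith
end

section
/- If G is an n-vertex plane triangulation on 6 vertices all of whose faces are triangles except possibly one 4-face (i.e., a 6-vertex planar graph with 11 edges), then G contains a Theta graph on 6 vertices as a subgraph. Equivalently, every Θ₆-free planar graph on 6 vertices has at most 10 edges. -/
open SimpleGraph

/-!
A graph on `n ≥ 6` vertices that misses at most `n - 2` edges is Hamiltonian unless it contains
`K_{n-1}`, by the Bondy–Chvátal closure: a nonadjacent pair whose degrees sum to at least `n` may
be joined without affecting Hamiltonicity, and joining such pairs leads to the complete graph.
Such a pair is available while edges are missing: in the complement `H` a vertex of degree `n - 2`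
would be incident to every edge of `H`, leaving a `K_{n-1}` in `G`; and if every edge of `H` had
degree sum at least `n - 1`, then some three vertices would have total degree exceeding
`|E(H)| + 3`, although each edge of `H` other than the three joining them is counted at most once.

On six vertices, eleven edges means four missing ones, and planarity excludes `K₅`. The resulting
Hamiltonian cycle uses six edges, and any other edge is a chord of it.
-/

open scoped List

section Hamiltonian

variable {V : Type*} {G : SimpleGraph V} {u v : V}

theorem snd_eq_or_penultimate_eq_of_mem_edges {c : G.Walk u u} (hc : c.IsCycle)
    (huv : s(u, v) ∈ c.edges) : c.snd = v ∨ c.penultimate = v := by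
  cases c with
  | nil => simp at huv
  | cons h q =>
    obtain huv | huv := List.mem_cons.1 huv
    · exact .inl (by simpa using (Sym2.congr_right.1 huv).symm)
    · rw [Walk.penultimate_cons_of_not_nil _ _ (Walk.not_nil_of_isCycle_cons hc)]
      exact .inr (((Walk.cons_isCycle_iff _ _).1 hc).1.eq_penultimate_of_mem_edges huv).symm

variable [DecidableEq V]

theorem isHamiltonianCycle_reverse {c : G.Walk u u} (hc : c.IsHamiltonianCycle) :
    c.reverse.IsHamiltonianCycle := by
  have := hc.finite
  have := Fintype.ofFinite V
  rw [Walk.isHamiltonianCycle_iff_isCycle_and_length_eq] at hc ⊢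
  exact ⟨hc.1.reverse, c.length_reverse.trans hc.2⟩

theorem exists_isHamiltonian_walk_snd {c : G.Walk u u} (hc : c.IsHamiltonianCycle) :
    ∃ p : G.Walk u c.snd, p.IsHamiltonian ∧ s(u, c.snd) ∉ p.edges := by
  cases c with
  | nil => exact (hc.ne_nil rfl).elim
  | cons h q =>
    rw [Walk.snd_cons]
    refine ⟨q.reverse, fun w ↦ ?_, ?_⟩
    · rw [Walk.support_reverse, List.count_reverse]
      simpa using hc.isHamiltonian_tail w
    · simpa using ((Walk.cons_isCycle_iff _ _).1 hc.isCycle).2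

theorem exists_isHamiltonian_walk_notMem_edges {a : V} {c : G.Walk a a}
    (hc : c.IsHamiltonianCycle) (huv : s(u, v) ∈ c.edges) :
    ∃ p : G.Walk u v, p.IsHamiltonian ∧ s(u, v) ∉ p.edges := by
  have hu : u ∈ c.support := c.fst_mem_support_of_mem_edges huv
  have hrot : (c.rotate u hu).IsHamiltonianCycle := hc.rotate hu
  obtain rfl | rfl := snd_eq_or_penultimate_eq_of_mem_edges hrot.isCycle
    ((c.rotate_edges u hu).mem_iff.2 huv)
  · exact exists_isHamiltonian_walk_snd hrot
  · rw [← Walk.snd_reverse]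
    exact exists_isHamiltonian_walk_snd (isHamiltonianCycle_reverse hrot)

variable [Fintype V]

theorem isHamiltonian_of_isHamiltonian_walk_of_adj {p : G.Walk u v} (hp : p.IsHamiltonian)
    (hvu : G.Adj v u) (hV : 2 < Fintype.card V) : G.IsHamiltonian := by
  refine fun _ ↦ ⟨v, .cons hvu p, Walk.isHamiltonianCycle_iff_isCycle_and_length_eq.2 ⟨?_, ?_⟩⟩
  · refine (Walk.cons_isCycle_iff p hvu).2 ⟨hp.isPath, fun hmem ↦ ?_⟩
    have := hp.isPath.length_eq_one_of_mem_edges (Sym2.eq_swap ▸ hmem)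
    have := hp.length_eq
    lia
  · rw [Walk.length_cons, hp.length_eq]
    lia

theorem isHamiltonian_of_crossing_chords {p : G.Walk u v} (hp : p.IsHamiltonian)
    (hV : 2 < Fintype.card V) {i : ℕ} (hi : i < p.length) (hu : G.Adj u (p.getVert (i + 1)))
    (hv : G.Adj v (p.getVert i)) : G.IsHamiltonian := by
  let q := (p.drop (i + 1)).append (.cons hv (p.take i).reverse)
  have hperm : q.support ~ p.support := by
    rw [Walk.support_append, Walk.support_cons, List.tail_cons, Walk.support_reverse,
      Walk.support_take, Walk.drop_support_eq_support_drop_min, min_eq_left hi]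
    calc
      _ ~ p.support.drop (i + 1) ++ p.support.take (i + 1) := (List.reverse_perm _).append_left _
      _ ~ p.support.take (i + 1) ++ p.support.drop (i + 1) := List.perm_append_comm
      _ = p.support := List.take_append_drop _ _
  have hq : q.IsHamiltonian := fun w ↦ (hperm.count_eq w).trans (hp w)
  exact isHamiltonian_of_isHamiltonian_walk_of_adj hq hu hV

theorem isHamiltonian_of_card_le_degree_add_degree [DecidableRel G.Adj] {p : G.Walk u v}
    (hp : p.IsHamiltonian) (hV : 2 < Fintype.card V)
    (hdeg : Fintype.card V ≤ G.degree u + G.degree v) : G.IsHamiltonian := by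
  let A := (Finset.range p.length).filter fun i ↦ G.Adj u (p.getVert (i + 1))
  let B := (Finset.range p.length).filter fun i ↦ G.Adj v (p.getVert i)
  have hA : G.degree u ≤ A.card := by
    refine Finset.card_le_card_of_surjOn (fun i ↦ p.getVert (i + 1)) fun w hw ↦ ?_
    obtain ⟨j, rfl, hj⟩ := Walk.mem_support_iff_exists_getVert.1 (hp.mem_support w)
    obtain _ | i := j
    · simp at hw
    · exact ⟨i, by simp_all [A, Nat.lt_of_succ_le hj], rfl⟩
  have hB : G.degree v ≤ B.card := by
    refine Finset.card_le_card_of_surjOn p.getVert fun w hw ↦ ?_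
    obtain ⟨j, rfl, hj⟩ := Walk.mem_support_iff_exists_getVert.1 (hp.mem_support w)
    obtain rfl | hj := hj.eq_or_lt
    · simp at hw
    · exact ⟨j, by simp_all [B], rfl⟩
  have hcard : (Finset.range p.length).card < A.card + B.card := by
    rw [Finset.card_range, hp.length_eq]
    lia
  obtain ⟨i, hi⟩ := Finset.inter_nonempty_of_card_lt_card_add_card
    (Finset.filter_subset _ _) (Finset.filter_subset _ _) hcard
  simp only [Finset.mem_inter, Finset.mem_filter, Finset.mem_range] at hi
  exact isHamiltonian_of_crossing_chords hp hV hi.1.1 hi.1.2 hi.2.2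

theorem exists_isHamiltonian_walk_of_sup_edge (hG : ¬ G.IsHamiltonian)
    (huv : (G ⊔ edge u v).IsHamiltonian) : ∃ p : G.Walk u v, p.IsHamiltonian := by
  have transferable {a b : V} {p : (G ⊔ edge u v).Walk a b} (hp : s(u, v) ∉ p.edges) :
      ∀ e ∈ p.edges, e ∈ G.edgeSet := by
    intro e he
    have := p.edges_subset_edgeSet he
    rw [edgeSet_sup] at this
    refine this.resolve_right fun h ↦ hp ?_
    simp_all
  by_cases hV : Fintype.card V = 1
  · exact (hG (.of_card_eq_one hV)).elim
  obtain ⟨a, c, hc⟩ := huv hV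
  by_cases he : s(u, v) ∈ c.edges
  · obtain ⟨p, hp, hpe⟩ := exists_isHamiltonian_walk_notMem_edges hc he
    exact ⟨p.transfer G (transferable hpe), by simpa [Walk.IsHamiltonian] using hp⟩
  · refine (hG fun _ ↦ ⟨a, c.transfer G (transferable he), ?_⟩).elim
    rw [Walk.isHamiltonianCycle_iff_isCycle_and_length_eq, Walk.length_transfer]
    exact ⟨hc.isCycle.transfer _, hc.length_eq⟩

theorem isHamiltonian_of_sup_edge [DecidableRel G.Adj]
    (hdeg : Fintype.card V ≤ G.degree u + G.degree v) (huv : (G ⊔ edge u v).IsHamiltonian) :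
    G.IsHamiltonian := by
  by_contra hG
  have hV : 2 < Fintype.card V := by
    obtain ⟨_, c, hc⟩ := huv fun hV ↦ hG (.of_card_eq_one hV)
    exact hc.length_eq ▸ hc.three_le_length
  obtain ⟨p, hp⟩ := exists_isHamiltonian_walk_of_sup_edge hG huv
  exact hG (isHamiltonian_of_card_le_degree_add_degree hp hV hdeg)

theorem isHamiltonian_iff_cycleGraph_isContained (hV : 2 < Fintype.card V) :
    G.IsHamiltonian ↔ cycleGraph (Fintype.card V) ⊑ G := by
  simp only [cycleGraph_isContained_iff hV, ← Walk.isHamiltonianCycle_iff_isCycle_and_length_eq]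
  exact ⟨fun hG ↦ hG (by lia), fun hG _ ↦ hG⟩

theorem isHamiltonian_top (hV : 2 < Fintype.card V) : (⊤ : SimpleGraph V).IsHamiltonian := by
  rw [isHamiltonian_iff_cycleGraph_isContained hV]
  exact isContained_top_iff.2 ⟨(Fintype.equivFin V).symm.toEmbedding⟩

end Hamiltonian

section Counting

variable {V : Type*} [Fintype V] (H : SimpleGraph V) [DecidableRel H.Adj]

theorem sum_degree_le_card_biUnion_incidenceFinset_add_choose [DecidableEq V] (s : Finset V) :
    ∑ v ∈ s, H.degree v ≤ (s.biUnion (H.incidenceFinset ·)).card + s.card.choose 2 := by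
  induction s using Finset.induction_on with
  | empty => simp
  | insert a s ha ih =>
    have hinter : (H.incidenceFinset a ∩ s.biUnion (H.incidenceFinset ·)).card ≤ s.card := by
      refine (Finset.card_le_card (t := s.image (s(a, ·))) fun e he ↦ ?_).trans
        Finset.card_image_le
      simp only [Finset.mem_inter, Finset.mem_biUnion, mem_incidenceFinset] at he
      obtain ⟨he, v, hv, hev⟩ := he
      have := H.incidenceSet_inter_incidenceSet_subset (ne_of_mem_of_not_mem hv ha).symm ⟨he, hev⟩
      exact Finset.mem_image.2 ⟨v, hv, this.symm⟩
    have := Finset.card_union_add_card_inter (H.incidenceFinset a)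
      (s.biUnion (H.incidenceFinset ·))
    rw [card_incidenceFinset_eq_degree] at this
    rw [Finset.sum_insert ha, Finset.biUnion_insert, Finset.card_insert_of_notMem ha,
      Nat.choose_succ_succ' s.card 1, Nat.choose_one_right]
    lia

theorem sum_degree_le_card_edgeFinset_add_choose (s : Finset V) :
    ∑ v ∈ s, H.degree v ≤ H.edgeFinset.card + s.card.choose 2 := by
  classical
  refine (sum_degree_le_card_biUnion_incidenceFinset_add_choose H s).trans ?_
  gcongr
  exact Finset.biUnion_subset.2 fun v _ ↦ H.incidenceFinset_subset v

variable {H}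

theorem exists_adj_degree_add_degree_le {k : ℕ} (hk : 4 ≤ k) (hH : H ≠ ⊥)
    (hE : H.edgeFinset.card ≤ k) (hdeg : ∀ v, H.degree v < k) :
    ∃ u v, H.Adj u v ∧ H.degree u + H.degree v ≤ k := by
  classical
  by_contra! hlarge
  obtain ⟨u, v, huv⟩ := ne_bot_iff_exists_adj.1 hH
  wlog hle : H.degree v ≤ H.degree u
  · exact this hk hH hE hdeg hlarge v u huv.symm (by lia)
  obtain ⟨w, hw, hwu⟩ : ∃ w ∈ H.neighborFinset v, w ≠ u := by
    refine Finset.exists_mem_ne ?_ u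
    rw [card_neighborFinset_eq_degree]
    have := hlarge u v huv
    have := hdeg u
    lia
  rw [mem_neighborFinset] at hw
  have hsum := sum_degree_le_card_edgeFinset_add_choose H {u, v, w}
  rw [Finset.sum_insert (by simp [huv.ne, hwu.symm]), Finset.sum_pair hw.ne,
    Finset.card_eq_three.2 ⟨u, v, w, huv.ne, hwu.symm, hw.ne, rfl⟩, Nat.choose_succ_self_right]
    at hsum
  have := hlarge u v huv
  have := hlarge v w hw
  lia

end Counting

section Dense

variable {V : Type*} [Fintype V] [DecidableEq V] {G : SimpleGraph V} [DecidableRel G.Adj]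

theorem isHamiltonian_of_two_le_degree (hV : 6 ≤ Fintype.card V)
    (hE : Gᶜ.edgeFinset.card + 2 ≤ Fintype.card V) (hdeg : ∀ v, 2 ≤ G.degree v) :
    G.IsHamiltonian := by
  induction hm : Gᶜ.edgeFinset.card using Nat.strong_induction_on generalizing G with
  | h m ih =>
  by_cases hG : G = ⊤
  · exact hG ▸ isHamiltonian_top (by lia)
  obtain ⟨u, v, huv, hsum⟩ : ∃ u v, Gᶜ.Adj u v ∧
      Gᶜ.degree u + Gᶜ.degree v ≤ Fintype.card V - 2 := by
    refine exists_adj_degree_add_degree_le (by lia) (by simpa using hG) (by lia) fun v ↦ ?_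
    have := hdeg v
    rw [degree_compl]
    lia
  rw [compl_adj] at huv
  have hlt : G < G ⊔ edge u v := lt_sup_edge _ _ _ huv.1 huv.2
  have hcard : (G ⊔ edge u v)ᶜ.edgeFinset.card < Gᶜ.edgeFinset.card :=
    Finset.card_lt_card (edgeFinset_strict_mono (compl_lt_compl_iff_lt.2 hlt))
  refine isHamiltonian_of_sup_edge (u := u) (v := v) ?_
    (ih _ (hm ▸ hcard) (by lia) (fun w ↦ (hdeg w).trans (degree_le_of_le hlt.le)) rfl)
  rw [degree_compl, degree_compl] at hsum
  lia

theorem two_le_degree_of_cliqueFree (hE : Gᶜ.edgeFinset.card + 2 ≤ Fintype.card V)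
    (hG : G.CliqueFree (Fintype.card V - 1)) (v : V) : 2 ≤ G.degree v := by
  by_contra! hv
  have hall : Gᶜ.incidenceFinset v = Gᶜ.edgeFinset := by
    refine Finset.eq_of_subset_of_card_le (Gᶜ.incidenceFinset_subset v) ?_
    rw [card_incidenceFinset_eq_degree, degree_compl]
    lia
  refine hG (Finset.univ.erase v) ⟨fun x hx y hy hxy ↦ ?_, by simp⟩
  by_contra hadj
  have hmem : s(x, y) ∈ Gᶜ.incidenceFinset v := by
    rw [hall, mem_edgeFinset, mem_edgeSet, compl_adj]
    exact ⟨hxy, hadj⟩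
  have hv : v = x ∨ v = y := Sym2.mem_iff.1 ((mem_incidenceFinset ..).1 hmem).2
  simp_all [eq_comm]

theorem isHamiltonian_of_cliqueFree (hV : 6 ≤ Fintype.card V)
    (hE : Gᶜ.edgeFinset.card + 2 ≤ Fintype.card V) (hG : G.CliqueFree (Fintype.card V - 1)) :
    G.IsHamiltonian :=
  isHamiltonian_of_two_le_degree hV hE (two_le_degree_of_cliqueFree hE hG)

variable (G) in
theorem card_edgeFinset_add_card_edgeFinset_compl :
    G.edgeFinset.card + Gᶜ.edgeFinset.card = (Fintype.card V).choose 2 := by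
  rw [← Finset.card_union_of_disjoint (disjoint_edgeFinset.2 disjoint_compl_right),
    ← edgeFinset_sup, ← card_edgeFinset_top_eq_card_choose_two]
  congr!
  exact sup_compl_eq_top

end Dense

theorem card_edgeFinset_cycleGraph (n : ℕ) : (cycleGraph (n + 3)).edgeFinset.card = n + 3 := by
  have := (cycleGraph (n + 3)).sum_degrees_eq_twice_card_edges
  simp only [cycleGraph_degree_three_le, Finset.sum_const, Finset.card_univ, Fintype.card_fin,
    smul_eq_mul] at this
  lia

theorem exists_adj_not_adj_of_card_edgeFinset_lt {V W : Type*} [Fintype V] [Fintype W]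
    {G : SimpleGraph V} {H : SimpleGraph W} [DecidableRel G.Adj] [DecidableRel H.Adj] (e : W ≃ V)
    (hE : H.edgeFinset.card < G.edgeFinset.card) :
    ∃ a b, G.Adj (e a) (e b) ∧ ¬ H.Adj a b := by
  by_contra! h
  refine hE.not_ge ?_
  rw [← (Iso.comap e G).card_edgeFinset_eq]
  exact Finset.card_le_card (edgeFinset_mono fun a b ↦ h a b)

theorem hasMinor_of_isContained {V W : Type*} {G : SimpleGraph V} {H : SimpleGraph W}
    (h : H ⊑ G) : HasMinor G H := by
  obtain ⟨f⟩ := h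
  refine ⟨Function.partialInv f, fun w ↦ ?_, fun w ↦ ?_, fun w₁ w₂ hw ↦ ?_⟩
  · exact ⟨f w, Function.partialInv_left f.injective w⟩
  · rintro ⟨x, hx⟩ ⟨y, hy⟩
    have hxy : x = y := by
      rw [← (f.injective.isPartialInv w x).1 hx,
        ← (f.injective.isPartialInv w y).1 hy]
    subst hxy
    rfl
  · exact ⟨f w₁, f w₂, Function.partialInv_left f.injective w₁,
      Function.partialInv_left f.injective w₂, f.toHom.map_adj hw⟩

theorem cliqueFree_five_of_isPlanar {V : Type*} {G : SimpleGraph V} (hG : IsPlanar G) :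
    G.CliqueFree 5 := by
  by_contra h
  exact hG.1 (hasMinor_of_isContained ((not_cliqueFree_iff_top_isContained 5).1 h))

theorem hasTheta6_of_isHamiltonian {V : Type*} [Fintype V] [DecidableEq V] {G : SimpleGraph V}
    [DecidableRel G.Adj] (hV : Fintype.card V = 6) (hG : G.IsHamiltonian)
    (hE : 6 < G.edgeFinset.card) :
    HasTheta6 G := by
  obtain ⟨f⟩ : cycleGraph 6 ⊑ G := hV ▸ (isHamiltonian_iff_cycleGraph_isContained (by lia)).1 hG
  have hf : Function.Bijective f :=
    (Fintype.bijective_iff_injective_and_card f).2 ⟨f.injective, by simp [hV]⟩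
  obtain ⟨i, j, hij, hchord⟩ := exists_adj_not_adj_of_card_edgeFinset_lt (H := cycleGraph 6)
    (.ofBijective f hf) (by rwa [card_edgeFinset_cycleGraph])
  rw [cycleGraph_adj, sub_eq_iff_eq_add', sub_eq_iff_eq_add', not_or] at hchord
  refine ⟨f, f.injective, fun i ↦ f.toHom.map_adj (by simp [cycleGraph_adj]), i, j,
    fun h ↦ hij.ne (congrArg f h), hchord.2, hchord.1, hij⟩

theorem six_vertex_eleven_edges_hasTheta6_general {V : Type*} [Fintype V] {G : SimpleGraph V}
    (hV : Fintype.card V = 6) (hG : G.CliqueFree 5) (hE : 11 ≤ G.edgeSet.ncard) :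
    HasTheta6 G := by
  classical
  rw [← coe_edgeFinset, Set.ncard_coe_finset] at hE
  have hcompl : G.edgeFinset.card + Gᶜ.edgeFinset.card = 15 := by
    rw [card_edgeFinset_add_card_edgeFinset_compl, hV]
    rfl
  have hham : G.IsHamiltonian := isHamiltonian_of_cliqueFree hV.ge (by lia) (hV ▸ hG)
  exact hasTheta6_of_isHamiltonian hV hham (by lia)

/-- A planar graph on 6 vertices with 11 edges contains a Theta graph on 6
vertices; equivalently, every Θ₆-free planar graph on 6 vertices has at most
10 edges. -/
theorem six_vertex_eleven_edges_hasTheta6 :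
    (∀ G : SimpleGraph (Fin 6), IsPlanar G → G.edgeSet.ncard = 11 →
      HasTheta6 G) ∧
    (∀ G : SimpleGraph (Fin 6), IsPlanar G → ¬ HasTheta6 G →
      G.edgeSet.ncard ≤ 10) := by
  have key (G : SimpleGraph (Fin 6)) (hG : IsPlanar G) : 11 ≤ G.edgeSet.ncard → HasTheta6 G :=
    six_vertex_eleven_edges_hasTheta6_general (Fintype.card_fin 6) (cliqueFree_five_of_isPlanar hG)
  exact ⟨fun G hG hE ↦ key G hG hE.ge,
    fun G hG hθ ↦ Nat.le_of_lt_succ (not_le.1 (mt (key G hG) hθ))⟩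
end
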